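/- Suppose there exist real numbers θ > 1, σ > 1 and r₀ > 0 such that ∫_1^∞ (g_θ(t)·t)^{−1/p} dt < ∞ and ∫_1^∞ g_θ(t)^{−1/α} dt < ∞, while ∫_{r₀}^∞ (r·f_σ(r))^{1/(p−1)} dr < ∞. Define F₀(ξ) = (∫_ξ^∞ (g_θ(t)·t)^{−1/p} dt)^{p/(p−1)} + ∫_ξ^∞ g_θ(t)^{−1/α} dt for ξ > 0. Then there exists a constant C > 0, depending only on n, p, θ, σ, α, C₁ and C₂, such that every nonnegative C¹ solution u of div A(x,Du) + b(x)|Du|^α ≥ q(x)g(u) in ℝⁿ satisfies, for all sufficiently large r: either M(r;u) = 0 or F₀(M(r;u)) ≥ C·∫_r^∞ (ξ·f_σ(ξ))^{1/(p−1)} dξ (equivalently, M(r;u) ≤ F₀^{−1}(C ∫_r^∞ (ξ f_σ(ξ))^{1/(p−1)} dξ)). -/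

import Mathlib

open MeasureTheory Metric Set Filter
open scoped RealInnerProductSpace ENNReal

noncomputable section

abbrev Euc (n : ℕ) := EuclideanSpace ℝ (Fin n)

/-- Weak solution of `div A(x,Dv) + b(x)|Dv|^α ≥ a(x)` on an open set `U`:
for every nonnegative test function `φ ∈ C₀^∞(U)`,
`-∫ A(x,Dv)·Dφ + ∫ b |Dv|^α φ ≥ ∫ a φ`. -/
def IsWeakSol {n : ℕ} (A : Euc n → Euc n → Euc n) (b : Euc n → ℝ) (α : ℝ)
    (a : Euc n → ℝ) (U : Set (Euc n)) (v : Euc n → ℝ) : Prop :=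
  ∀ φ : Euc n → ℝ, ContDiff ℝ (⊤ : ℕ∞) φ → HasCompactSupport φ → tsupport φ ⊆ U →
    (∀ x, 0 ≤ φ x) →
    (∫ x in U, a x * φ x) ≤
      (-(∫ x in U, ⟪A x (gradient v x), gradient φ x⟫)) +
        ∫ x in U, b x * ‖gradient v x‖ ^ α * φ x

/-- Structural conditions on `A`: measurability, coercivity and growth. -/
def StructCond {n : ℕ} (A : Euc n → Euc n → Euc n) (p C₁ C₂ : ℝ) : Prop :=
  Measurable (Function.uncurry A) ∧
    ∀ x ζ : Euc n, C₁ * ‖ζ‖ ^ p ≤ ⟪ζ, A x ζ⟫ ∧ ‖A x ζ‖ ≤ C₂ * ‖ζ‖ ^ (p - 1)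

/-- Locally bounded function on `ℝⁿ`. -/
def LocBdd {n : ℕ} (b : Euc n → ℝ) : Prop :=
  ∀ K : Set (Euc n), IsCompact K → ∃ C, ∀ x ∈ K, b x ≤ C

/-- `M(r; u) = max_{|x| = r} u x`. -/
def sphMax {n : ℕ} (u : Euc n → ℝ) (r : ℝ) : ℝ := sSup (u '' Metric.sphere (0 : Euc n) r)

/-- `g_θ(t) = inf_{s ∈ (t/θ, θ t)} g s`. -/
def ginf (g : ℝ → ℝ) (θ t : ℝ) : ℝ := sInf (g '' Set.Ioo (t / θ) (θ * t))

/-- The open annulus `{x : r₁ < |x| < r₂}`. -/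
def Ann (n : ℕ) (r₁ r₂ : ℝ) : Set (Euc n) := {x : Euc n | r₁ < ‖x‖ ∧ ‖x‖ < r₂}

/-- `q_σ(r) = ess inf_{r/σ < |x| < σ r} q x`. -/
def qinf {n : ℕ} (q : Euc n → ℝ) (σ r : ℝ) : ℝ :=
  essInf q (volume.restrict (Ann n (r / σ) (σ * r)))

/-- `f_σ(r) = q_σ(r) / (1 + r q_σ(r)^{(α-p+1)/α} ess sup_{r/σ<|x|<σr} b^{(p-1)/α})`. -/
def fdef {n : ℕ} (q b : Euc n → ℝ) (p α σ r : ℝ) : ℝ :=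
  qinf q σ r /
    (1 + r * qinf q σ r ^ ((α - p + 1) / α) *
      essSup (fun x => b x ^ ((p - 1) / α)) (volume.restrict (Ann n (r / σ) (σ * r))))

/-- `F₀(ξ) = (∫_ξ^∞ (g_θ(t) t)^{-1/p} dt)^{p/(p-1)} + ∫_ξ^∞ g_θ(t)^{-1/α} dt`. -/
def Fzero (g : ℝ → ℝ) (θ p α ξ : ℝ) : ℝ :=
  (∫ t in Set.Ioi ξ, (ginf g θ t * t) ^ (-(1 / p))) ^ (p / (p - 1)) +
    ∫ t in Set.Ioi ξ, ginf g θ t ^ (-(1 / α))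

open scoped Topology Convolution

/-- Sobolev inequality on sets. -/
lemma sob_set (n : ℕ) (hn : 2 ≤ n) : ∃ Cs : ℝ, 0 < Cs ∧ ∀ W : Euc n → ℝ, ContDiff ℝ 1 W →
    HasCompactSupport W → (∀ x, 0 ≤ W x) → ∀ S : Set (Euc n), volume S ≠ ⊤ →
    ∫ x in S, W x ≤ Cs * (volume.real S) ^ (1 / (n : ℝ)) * ∫ x, ‖gradient W x‖ := by
  have hn1 : (1 : ℝ) < n := by exact_mod_cast (by omega : 1 < n)
  set p' : ℝ := (n : ℝ) / (n - 1) with hp'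
  have hconj : Real.HolderConjugate (n : ℝ) p' := Real.HolderConjugate.conjExponent hn1
  have hp'0 : 0 < p' := hconj.symm.pos
  set K := lintegralPowLePowLIntegralFDerivConst (volume : Measure (Euc n)) p' with hK
  refine ⟨(K : ℝ) ^ (1 / p') + 1, by positivity, ?_⟩
  intro W hW hWc hW0 S hS
  have hfr : Module.finrank ℝ (Euc n) = n := by simp
  have h1 := lintegral_pow_le_pow_lintegral_fderiv (volume : Measure (Euc n)) hW hWc (p := p')
    (by rw [hfr]; exact hconj)
  have hgr : ∀ x, ‖fderiv ℝ W x‖ₑ = ‖gradient W x‖ₑ := by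
    intro x
    have : ‖gradient W x‖ = ‖fderiv ℝ W x‖ := by
      unfold gradient; exact LinearIsometryEquiv.norm_map _ _
    rw [← ofReal_norm, ← ofReal_norm, this]
  have hWcont := hW.continuous
  have hH := ENNReal.lintegral_mul_le_Lp_mul_Lq (volume.restrict S) hconj
    (f := fun _ => 1) (g := fun x => ‖W x‖ₑ) aemeasurable_const
    (hWcont.enorm.measurable.aemeasurable)
  have hgrint : Integrable (fun x => ‖gradient W x‖) volume := by
    have hc : Continuous (fderiv ℝ W) := hW.continuous_fderiv (by norm_num)
    have : Integrable (fun x => ‖fderiv ℝ W x‖) volume :=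
      (hc.norm).integrable_of_hasCompactSupport ((hWc.fderiv ℝ).norm)
    refine this.congr (Eventually.of_forall fun x => ?_)
    unfold gradient; exact (LinearIsometryEquiv.norm_map _ _).symm
  have hD : ∫⁻ x, ‖fderiv ℝ W x‖ₑ = ENNReal.ofReal (∫ x, ‖gradient W x‖) := by
    rw [ofReal_integral_eq_lintegral_ofReal hgrint (Eventually.of_forall fun x => norm_nonneg _)]
    refine lintegral_congr fun x => ?_
    rw [hgr, ofReal_norm]
  have hL : ∫⁻ x in S, ‖W x‖ₑ = ENNReal.ofReal (∫ x in S, W x) := by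
    rw [ofReal_integral_eq_lintegral_ofReal
      ((hWcont.integrable_of_hasCompactSupport hWc).integrableOn)
      (Eventually.of_forall fun x => hW0 x)]
    refine lintegral_congr fun x => ?_
    rw [← ofReal_norm, Real.norm_of_nonneg (hW0 x)]
  have key : ENNReal.ofReal (∫ x in S, W x) ≤
      (volume S) ^ (1 / (n : ℝ)) * ((K : ℝ≥0∞) ^ (1 / p') * ENNReal.ofReal (∫ x, ‖gradient W x‖)) := by
    rw [← hL, ← hD]
    refine le_trans (le_of_eq (lintegral_congr fun x => ?_)) (hH.trans ?_)
    · simp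
    · show _ * _ ≤ _ * _
      refine mul_le_mul' ?_ ?_
      · simp
      · show (∫⁻ x in S, ‖W x‖ₑ ^ p') ^ (1 / p') ≤ _
        calc (∫⁻ x in S, ‖W x‖ₑ ^ p') ^ (1 / p')
              ≤ ((K : ℝ≥0∞) * (∫⁻ x, ‖fderiv ℝ W x‖ₑ) ^ p') ^ (1 / p') := by
                gcongr
                exact (setLIntegral_le_lintegral _ _).trans h1
            _ = _ := by
                rw [ENNReal.mul_rpow_of_nonneg _ _ (by positivity), ← ENNReal.rpow_mul,
                  mul_one_div_cancel hp'0.ne', ENNReal.rpow_one]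
  have hG0 : 0 ≤ ∫ x, ‖gradient W x‖ := integral_nonneg fun x => norm_nonneg _
  have hI0 : 0 ≤ ∫ x in S, W x := integral_nonneg fun x => hW0 x
  have hfin : (volume S) ^ (1 / (n : ℝ)) * ((K : ℝ≥0∞) ^ (1 / p') * ENNReal.ofReal (∫ x, ‖gradient W x‖)) ≠ ⊤ := by
    refine ENNReal.mul_ne_top (ENNReal.rpow_ne_top_of_nonneg (by positivity) hS)
      (ENNReal.mul_ne_top (ENNReal.rpow_ne_top_of_nonneg (by positivity) (by simp)) (by simp))
  have := ENNReal.toReal_mono hfin key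
  rw [ENNReal.toReal_ofReal hI0, ENNReal.toReal_mul, ENNReal.toReal_mul, ENNReal.toReal_ofReal hG0,
    ← ENNReal.toReal_rpow, ← ENNReal.toReal_rpow] at this
  refine this.trans ?_
  have : (volume S).toReal ^ (1 / (n:ℝ)) = volume.real S ^ (1 / (n:ℝ)) := rfl
  rw [this]
  have h0 : 0 ≤ volume.real S ^ (1 / (n:ℝ)) * ∫ x, ‖gradient W x‖ := by positivity
  have h3 : ((K:ℝ≥0∞).toReal) ^ (1/p') = (K:ℝ) ^ (1/p') := rfl
  rw [h3]
  nlinarith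

/-- Smooth approximation of `C¹` functions with compact support. -/
lemma mollify {n : ℕ} (φ : Euc n → ℝ) (hφ : ContDiff ℝ 1 φ) (hc : HasCompactSupport φ)
    (h0 : ∀ x, 0 ≤ φ x) : ∃ R : ℝ, ∀ ε : ℝ, 0 < ε → ∃ ψ : Euc n → ℝ,
      ContDiff ℝ (⊤ : ℕ∞) ψ ∧ HasCompactSupport ψ ∧ (∀ x, 0 ≤ ψ x) ∧
      (∀ x, x ∉ closedBall (0 : Euc n) R → ψ x = 0 ∧ gradient ψ x = 0) ∧
      (∀ x, |ψ x - φ x| ≤ ε) ∧ (∀ x, ‖gradient ψ x - gradient φ x‖ ≤ ε) := by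
  obtain ⟨R, hR⟩ := hc.isBounded.subset_closedBall (0 : Euc n)
  refine ⟨R + 2, fun ε hε => ?_⟩
  have hu1 : UniformContinuous φ := hc.uniformContinuous_of_continuous hφ.continuous
  have hu2 : UniformContinuous (fderiv ℝ φ) :=
    (hc.fderiv ℝ).uniformContinuous_of_continuous (hφ.continuous_fderiv (by norm_num))
  rw [Metric.uniformContinuous_iff] at hu1 hu2
  obtain ⟨η1, hη1, h1⟩ := hu1 ε hε
  obtain ⟨η2, hη2, h2⟩ := hu2 ε hε
  set η := min (min η1 η2) 1 with hη
  have hη0 : 0 < η := by positivity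
  let B : ContDiffBump (0 : Euc n) := ⟨η / 2, η, by positivity, by linarith⟩
  set ψ : Euc n → ℝ := (B.normed volume ⋆[ContinuousLinearMap.lsmul ℝ ℝ, volume] φ) with hψ
  have hsm : ContDiff ℝ (⊤ : ℕ∞) ψ :=
    (B.hasCompactSupport_normed).contDiff_convolution_left _ B.contDiff_normed
      hφ.continuous.locallyIntegrable
  have hder : ∀ x, HasFDerivAt ψ ((B.normed volume ⋆[ContinuousLinearMap.lsmul ℝ ℝ, volume] (fderiv ℝ φ)) x) x := by
    intro x
    have := hc.hasFDerivAt_convolution_right (ContinuousLinearMap.lsmul ℝ ℝ)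
      (B.continuous_normed (μ := volume)).locallyIntegrable hφ x (μ := volume)
    refine this.congr_fderiv ?_
    rw [convolution_def, convolution_def]
    refine integral_congr_ae (Eventually.of_forall fun t => ?_)
    ext v
    simp [ContinuousLinearMap.precompR_apply]
  have hsupp : Function.support ψ ⊆ closedBall 0 (R + 1) := by
    refine (support_convolution_subset _).trans ?_
    rintro _ ⟨a, ha, c, hc', rfl⟩
    rw [B.support_normed_eq] at ha
    have h3 := hR (subset_tsupport _ hc')
    simp only [mem_ball, mem_closedBall, dist_zero_right] at ha h3 ⊢
    have : B.rOut ≤ 1 := min_le_right _ _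
    calc ‖a + c‖ ≤ ‖a‖ + ‖c‖ := norm_add_le _ _
      _ ≤ _ := by linarith
  have hz : ∀ x, x ∉ closedBall (0 : Euc n) (R + 1) → ψ x = 0 := fun x hx => by
    by_contra h; exact hx (hsupp h)
  refine ⟨ψ, hsm, HasCompactSupport.intro (isCompact_closedBall 0 (R+1)) (fun x hx => hz x hx),
    ?_, ?_, ?_, ?_⟩
  · intro x
    exact integral_nonneg fun t => mul_nonneg (B.nonneg_normed t) (h0 _)
  · intro x hx
    have hx' : x ∉ closedBall (0 : Euc n) (R + 1) := fun h => hx (closedBall_subset_closedBall (by linarith) h)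
    refine ⟨hz x hx', ?_⟩
    have : ψ =ᶠ[𝓝 x] fun _ => 0 := by
      filter_upwards [isClosed_closedBall.isOpen_compl.mem_nhds hx'] with y hy using hz y hy
    unfold gradient
    rw [this.fderiv_eq]; simp
  · intro x
    have := B.dist_normed_convolution_le (μ := volume) (g := φ) (x₀ := x) (ε := ε)
      hφ.continuous.aestronglyMeasurable (fun y hy => (h1 (lt_of_lt_of_le hy ((min_le_left _ _).trans (min_le_left _ _)))).le)
    rwa [Real.dist_eq] at this
  · intro x
    have := B.dist_normed_convolution_le (μ := volume) (g := fderiv ℝ φ) (x₀ := x) (ε := ε)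
      (hφ.continuous_fderiv (by norm_num)).aestronglyMeasurable (fun y hy => (h2 (lt_of_lt_of_le hy ((min_le_left _ _).trans (min_le_right _ _)))).le)
    rw [dist_eq_norm] at this
    unfold gradient
    rw [(hder x).fderiv, ← map_sub, LinearIsometryEquiv.norm_map]
    exact this

/-- Extension of weak inequalities to `C¹` test functions. -/
lemma weak_c1 {n : ℕ} (F : Euc n → Euc n) (c : Euc n → ℝ) (hF : LocallyIntegrable F volume)
    (hcI : LocallyIntegrable c volume)
    (h : ∀ φ : Euc n → ℝ, ContDiff ℝ (⊤ : ℕ∞) φ → HasCompactSupport φ → (∀ x, 0 ≤ φ x) →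
      ∫ x, ⟪F x, gradient φ x⟫ ≤ ∫ x, c x * φ x)
    (φ : Euc n → ℝ) (hφ : ContDiff ℝ 1 φ) (hc : HasCompactSupport φ) (h0 : ∀ x, 0 ≤ φ x) :
    ∫ x, ⟪F x, gradient φ x⟫ ≤ ∫ x, c x * φ x := by
  obtain ⟨R, hR⟩ := mollify φ hφ hc h0
  choose! ψ hψ1 hψ2 hψ3 hψ4 hψ5 hψ6 using hR
  have hdl := tendsto_one_div_add_atTop_nhds_zero_nat (𝕜 := ℝ)
  have hpos : ∀ k : ℕ, (0:ℝ) < 1 / ((k:ℝ) + 1) := fun k => by positivity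
  set K := closedBall (0 : Euc n) R
  have hK : MeasurableSet K := measurableSet_closedBall
  have hFK : IntegrableOn F K := hF.integrableOn_isCompact (isCompact_closedBall _ _)
  have hcK : IntegrableOn c K := hcI.integrableOn_isCompact (isCompact_closedBall _ _)
  have hgc : Continuous (gradient φ) := by
    unfold gradient
    exact (LinearIsometryEquiv.continuous _).comp (hφ.continuous_fderiv (by norm_num))
  have hψc : ∀ ε, 0 < ε → Continuous (gradient (ψ ε)) := fun ε hε => by
    unfold gradient
    exact (LinearIsometryEquiv.continuous _).comp ((hψ1 ε hε).continuous_fderiv (by simp))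
  have hgcs : HasCompactSupport (gradient φ) := by
    unfold gradient
    exact (hc.fderiv ℝ).comp_left (map_zero _)
  obtain ⟨M1, hM1⟩ := hgc.bounded_above_of_compact_support hgcs
  obtain ⟨M2, hM2⟩ := hφ.continuous.bounded_above_of_compact_support hc
  have T1 : Tendsto (fun k : ℕ => ∫ x, ⟪F x, gradient (ψ (1/((k:ℝ)+1))) x⟫) atTop
      (𝓝 (∫ x, ⟪F x, gradient φ x⟫)) := by
    refine tendsto_integral_of_dominated_convergence (fun x => K.indicator (fun x => ‖F x‖ * (M1 + 1)) x) ?_ ?_ ?_ ?_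
    · intro k
      exact hF.aestronglyMeasurable.inner (hψc _ (hpos k)).aestronglyMeasurable
    · rw [integrable_indicator_iff hK]
      exact hFK.norm.mul_const _
    · intro k
      refine Eventually.of_forall fun x => ?_
      by_cases hx : x ∈ K
      · rw [indicator_of_mem hx]
        refine (norm_inner_le_norm _ _).trans ?_
        gcongr
        have h1 := hψ6 _ (hpos k) x
        have h2 : (1:ℝ) / ((k:ℝ)+1) ≤ 1 := by
          rw [div_le_one (by positivity)]; linarith [(Nat.cast_nonneg k : (0:ℝ) ≤ k)]
        have h3 := norm_le_norm_add_norm_sub' (gradient (ψ (1/((k:ℝ)+1))) x) (gradient φ x)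
        linarith [hM1 x]
      · rw [indicator_of_notMem hx, (hψ4 _ (hpos k) x hx).2]; simp
    · refine Eventually.of_forall fun x => ?_
      have : Tendsto (fun k : ℕ => gradient (ψ (1/((k:ℝ)+1))) x) atTop (𝓝 (gradient φ x)) := by
        rw [tendsto_iff_norm_sub_tendsto_zero]
        exact squeeze_zero (fun _ => norm_nonneg _) (fun k => hψ6 _ (hpos k) x) hdl
      exact tendsto_const_nhds.inner this
  have T2 : Tendsto (fun k : ℕ => ∫ x, c x * (ψ (1/((k:ℝ)+1))) x) atTop
      (𝓝 (∫ x, c x * φ x)) := by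
    refine tendsto_integral_of_dominated_convergence (fun x => K.indicator (fun x => ‖c x‖ * (M2 + 1)) x) ?_ ?_ ?_ ?_
    · intro k
      exact hcI.aestronglyMeasurable.mul (hψ1 _ (hpos k)).continuous.aestronglyMeasurable
    · rw [integrable_indicator_iff hK]
      exact hcK.norm.mul_const _
    · intro k
      refine Eventually.of_forall fun x => ?_
      by_cases hx : x ∈ K
      · rw [indicator_of_mem hx, norm_mul]
        gcongr
        have h1 := hψ5 _ (hpos k) x
        have h2 : (1:ℝ) / ((k:ℝ)+1) ≤ 1 := by
          rw [div_le_one (by positivity)]; linarith [(Nat.cast_nonneg k : (0:ℝ) ≤ k)]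
        have h3 := norm_le_norm_add_norm_sub' ((ψ (1/((k:ℝ)+1))) x) (φ x)
        rw [← Real.norm_eq_abs] at h1
        linarith [hM2 x]
      · rw [indicator_of_notMem hx, (hψ4 _ (hpos k) x hx).1]; simp
    · refine Eventually.of_forall fun x => ?_
      have : Tendsto (fun k : ℕ => (ψ (1/((k:ℝ)+1))) x) atTop (𝓝 (φ x)) := by
        rw [tendsto_iff_norm_sub_tendsto_zero]
        exact squeeze_zero (fun _ => norm_nonneg _) (fun k => hψ5 _ (hpos k) x) hdl
      exact tendsto_const_nhds.mul this
  exact le_of_tendsto_of_tendsto' T1 T2 (fun k => h _ (hψ1 _ (hpos k)) (hψ2 _ (hpos k)) (hψ3 _ (hpos k)))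

open scoped Topology

lemma hasDerivAt_posPart_rpow (m : ℝ) (hm : 1 < m) (t : ℝ) :
    HasDerivAt (fun t : ℝ => (max t 0) ^ m) (m * (max t 0) ^ (m - 1)) t := by
  rcases lt_trichotomy t 0 with h | h | h
  · have : (fun t : ℝ => (max t 0) ^ m) =ᶠ[𝓝 t] fun _ => 0 := by
      filter_upwards [Iio_mem_nhds h] with y hy
      rw [max_eq_right (le_of_lt hy), Real.zero_rpow (by linarith)]
    rw [max_eq_right h.le, Real.zero_rpow (by linarith), mul_zero]
    exact (hasDerivAt_const t (0:ℝ)).congr_of_eventuallyEq this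
  · subst h
    rw [max_self, Real.zero_rpow (by linarith), mul_zero]
    have h1 : HasDerivAt (fun t : ℝ => |t| ^ m) 0 0 := by
      have := (hasDerivAt_abs_rpow 0 hm)
      simpa using this
    rw [hasDerivAt_iff_isLittleO] at h1 ⊢
    refine (Asymptotics.IsBigO.of_bound 1 (Eventually.of_forall fun x => ?_)).trans_isLittleO h1
    have h0 : (0:ℝ) ^ m = 0 := Real.zero_rpow (by linarith)
    have h2 : (0:ℝ) ≤ max x 0 ^ m := Real.rpow_nonneg (le_max_right _ _) _
    have h3 : (0:ℝ) ≤ |x| ^ m := Real.rpow_nonneg (abs_nonneg _) _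
    have h4 : max x 0 ^ m ≤ |x| ^ m :=
      Real.rpow_le_rpow (le_max_right _ _) (max_le (le_abs_self _) (abs_nonneg _)) (by linarith)
    simp only [max_self, sub_zero, smul_zero, abs_zero, one_mul, h0]
    rw [Real.norm_of_nonneg h2, Real.norm_of_nonneg h3]
    exact h4
  · have : (fun t : ℝ => (max t 0) ^ m) =ᶠ[𝓝 t] fun t => t ^ m := by
      filter_upwards [Ioi_mem_nhds h] with y hy
      rw [max_eq_left (le_of_lt hy)]
    rw [max_eq_left h.le]
    exact (Real.hasDerivAt_rpow_const (Or.inl h.ne')).congr_of_eventuallyEq this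

/-- Truncation of `z` above the level `s` in a ball. -/
def trunc {n : ℕ} (z : Euc n → ℝ) (y : Euc n) (δ s : ℝ) : Euc n → ℝ :=
  (ball y δ).indicator (fun x => max (z x - s) 0)

section trunc
variable {n : ℕ} {z : Euc n → ℝ} {y : Euc n} {δ s : ℝ}

lemma trunc_nonneg (x : Euc n) : 0 ≤ trunc z y δ s x :=
  indicator_nonneg (fun _ _ => le_max_right _ _) x

lemma trunc_of_mem {x : Euc n} (hx : x ∈ ball y δ) : trunc z y δ s x = max (z x - s) 0 :=
  indicator_of_mem hx _

lemma trunc_of_notMem {x : Euc n} (hx : x ∉ ball y δ) : trunc z y δ s x = 0 :=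
  indicator_of_notMem hx _

lemma trunc_ev_mem {x : Euc n} (hx : x ∈ ball y δ) :
    trunc z y δ s =ᶠ[𝓝 x] fun x => max (z x - s) 0 := by
  filter_upwards [isOpen_ball.mem_nhds hx] with x hx using trunc_of_mem hx

lemma trunc_ev_notMem (hz : Continuous z) (hs : ∀ x ∈ sphere y δ, z x < s) {x : Euc n}
    (hx : x ∉ ball y δ) : trunc z y δ s =ᶠ[𝓝 x] fun _ => 0 := by
  by_cases h : x ∈ sphere y δ
  · filter_upwards [(isOpen_Iio.preimage hz).mem_nhds (hs x h)] with w hw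
    by_cases h' : w ∈ ball y δ
    · rw [trunc_of_mem h', max_eq_right]
      have : z w < s := hw
      linarith
    · exact trunc_of_notMem h'
  · have : x ∉ closedBall y δ := by
      rw [← ball_union_sphere]; rintro (h1 | h1) <;> contradiction
    filter_upwards [isClosed_closedBall.isOpen_compl.mem_nhds this] with w hw
    exact trunc_of_notMem fun h => hw (ball_subset_closedBall h)

lemma trunc_continuous (hz : Continuous z) (hs : ∀ x ∈ sphere y δ, z x < s) :
    Continuous (trunc z y δ s) := by
  rw [continuous_iff_continuousAt]
  intro x
  by_cases hx : x ∈ ball y δ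
  · refine ContinuousAt.congr ?_ (trunc_ev_mem hx).symm
    exact ((hz.sub continuous_const).max continuous_const).continuousAt
  · exact continuousAt_const.congr (trunc_ev_notMem hz hs hx).symm

lemma trunc_hcs : HasCompactSupport (trunc z y δ s) :=
  HasCompactSupport.intro (isCompact_closedBall y δ)
    (fun _ hx => trunc_of_notMem fun h => hx (ball_subset_closedBall h))

lemma trunc_pow_hcs {m : ℝ} (hm : 0 < m) : HasCompactSupport (fun x => trunc z y δ s x ^ m) :=
  HasCompactSupport.intro (isCompact_closedBall y δ)
    (fun _ hx => by
      rw [trunc_of_notMem fun h => hx (ball_subset_closedBall h), Real.zero_rpow hm.ne'])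

lemma trunc_pow_hasFDerivAt (hz : ContDiff ℝ 1 z) (hs : ∀ x ∈ sphere y δ, z x < s) {m : ℝ}
    (hm : 1 < m) (x : Euc n) :
    HasFDerivAt (fun x => trunc z y δ s x ^ m) ((m * trunc z y δ s x ^ (m - 1)) • fderiv ℝ z x) x := by
  by_cases hx : x ∈ ball y δ
  · have h1 : HasFDerivAt (fun x => max (z x - s) 0 ^ m)
        ((m * max (z x - s) 0 ^ (m - 1)) • fderiv ℝ z x) x := by
      have h2 : HasFDerivAt (fun x => z x - s) (fderiv ℝ z x) x :=
        ((hz.differentiable (by norm_num)) x).hasFDerivAt.sub_const s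
      exact (hasDerivAt_posPart_rpow m hm (z x - s)).comp_hasFDerivAt x h2
    rw [trunc_of_mem hx]
    refine h1.congr_of_eventuallyEq ?_
    filter_upwards [trunc_ev_mem (z := z) (s := s) hx] with w hw
    rw [hw]
  · rw [trunc_of_notMem hx, Real.zero_rpow (by linarith), mul_zero, zero_smul]
    refine (hasFDerivAt_const (0:ℝ) x).congr_of_eventuallyEq ?_
    filter_upwards [trunc_ev_notMem hz.continuous hs hx] with w hw
    rw [hw, Real.zero_rpow (by linarith)]

lemma trunc_pow_contDiff (hz : ContDiff ℝ 1 z) (hs : ∀ x ∈ sphere y δ, z x < s) {m : ℝ}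
    (hm : 1 < m) : ContDiff ℝ 1 (fun x => trunc z y δ s x ^ m) := by
  rw [contDiff_one_iff_fderiv]
  refine ⟨fun x => (trunc_pow_hasFDerivAt hz hs hm x).differentiableAt, ?_⟩
  have : fderiv ℝ (fun x => trunc z y δ s x ^ m) =
      fun x => (m * trunc z y δ s x ^ (m - 1)) • fderiv ℝ z x :=
    funext fun x => (trunc_pow_hasFDerivAt hz hs hm x).fderiv
  rw [this]
  have hc := trunc_continuous hz.continuous hs
  have h1 : Continuous fun x => trunc z y δ s x ^ (m - 1) :=
    hc.rpow_const (fun _ => Or.inr (by linarith))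
  exact (continuous_const.mul h1).smul (hz.continuous_fderiv (by norm_num))

lemma trunc_pow_gradient (hz : ContDiff ℝ 1 z) (hs : ∀ x ∈ sphere y δ, z x < s) {m : ℝ}
    (hm : 1 < m) (x : Euc n) :
    gradient (fun x => trunc z y δ s x ^ m) x = (m * trunc z y δ s x ^ (m - 1)) • gradient z x := by
  unfold gradient
  rw [(trunc_pow_hasFDerivAt hz hs hm x).fderiv, map_smul]

end trunc

lemma gradient_continuous {n : ℕ} {u : Euc n → ℝ} (hu : ContDiff ℝ 1 u) :
    Continuous (gradient u) := by
  unfold gradient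
  exact (LinearIsometryEquiv.continuous _).comp (hu.continuous_fderiv (by norm_num))

lemma locint_of_bdd {n : ℕ} {F : Type*} [NormedAddCommGroup F] (f : Euc n → F)
    (hf : AEStronglyMeasurable f volume)
    (hb : ∀ K : Set (Euc n), IsCompact K → ∃ C, ∀ x ∈ K, ‖f x‖ ≤ C) :
    LocallyIntegrable f volume := by
  rw [locallyIntegrable_iff]
  intro K hK
  obtain ⟨C, hC⟩ := hb K hK
  refine Measure.integrableOn_of_bounded (M := C) hK.measure_lt_top.ne hf ?_
  filter_upwards [ae_restrict_mem hK.measurableSet] with x hx using hC x hx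

/-- Weak inequality with `C¹` test functions. -/
lemma sol_test {n : ℕ} {p C₁ C₂ α : ℝ} (hp : 1 < p) (hα₁ : p - 1 ≤ α)
    {A : Euc n → Euc n → Euc n} (hA : StructCond A p C₁ C₂)
    {b : Euc n → ℝ} (hbm : Measurable b) (hb0 : ∀ x, 0 ≤ b x) (hbl : LocBdd b)
    {q : Euc n → ℝ} (hqm : Measurable q) (hq0 : ∀ x, 0 ≤ q x) (hql : LocBdd q)
    {g : ℝ → ℝ} (hg : ContinuousOn g (Set.Ici 0))
    {u : Euc n → ℝ} (hu : ContDiff ℝ 1 u) (hu0 : ∀ x, 0 ≤ u x)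
    (hsol : IsWeakSol A b α (fun x => q x * g (u x)) Set.univ u) :
    LocallyIntegrable (fun x => A x (gradient u x)) volume ∧
    LocallyIntegrable (fun x => b x * ‖gradient u x‖ ^ α - q x * g (u x)) volume ∧
    ∀ φ : Euc n → ℝ, ContDiff ℝ 1 φ → HasCompactSupport φ → (∀ x, 0 ≤ φ x) →
      ∫ x, ⟪A x (gradient u x), gradient φ x⟫ ≤
        ∫ x, (b x * ‖gradient u x‖ ^ α - q x * g (u x)) * φ x := by
  have hα : 0 < α := by linarith
  have hgc := gradient_continuous hu
  have hgu : Continuous fun x => g (u x) :=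
    hg.comp_continuous hu.continuous fun x => hu0 x
  have hF : LocallyIntegrable (fun x => A x (gradient u x)) volume := by
    refine locint_of_bdd _ ?_ ?_
    · have : Measurable fun x => Function.uncurry A (x, gradient u x) :=
        hA.1.comp (measurable_id.prodMk hgc.measurable)
      exact this.aestronglyMeasurable
    · intro K hK
      obtain ⟨C, hC⟩ := hK.exists_bound_of_continuousOn
        ((continuous_const (y := C₂)).mul (hgc.norm.rpow_const (p := p - 1)
          (fun _ => Or.inr (by linarith)))).continuousOn
      exact ⟨C, fun x hx => ((hA.2 x _).2.trans (le_abs_self _)).trans (hC x hx)⟩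
  have hpc : Continuous fun x => ‖gradient u x‖ ^ α :=
    hgc.norm.rpow_const (fun _ => Or.inr hα.le)
  have hB : LocallyIntegrable (fun x => b x * ‖gradient u x‖ ^ α) volume := by
    refine locint_of_bdd _ (hbm.aestronglyMeasurable.mul hpc.aestronglyMeasurable) ?_
    intro K hK
    obtain ⟨C, hC⟩ := hbl K hK
    obtain ⟨D, hD⟩ := hK.exists_bound_of_continuousOn hpc.continuousOn
    refine ⟨C * D, fun x hx => ?_⟩
    rw [norm_mul, Real.norm_of_nonneg (hb0 x)]
    exact mul_le_mul (hC x hx) (hD x hx) (norm_nonneg _) ((hb0 x).trans (hC x hx))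
  have hQ : LocallyIntegrable (fun x => q x * g (u x)) volume := by
    refine locint_of_bdd _ (hqm.aestronglyMeasurable.mul hgu.aestronglyMeasurable) ?_
    intro K hK
    obtain ⟨C, hC⟩ := hql K hK
    obtain ⟨D, hD⟩ := hK.exists_bound_of_continuousOn hgu.continuousOn
    refine ⟨C * D, fun x hx => ?_⟩
    rw [norm_mul, Real.norm_of_nonneg (hq0 x)]
    exact mul_le_mul (hC x hx) (hD x hx) (norm_nonneg _) ((hq0 x).trans (hC x hx))
  refine ⟨hF, hB.sub hQ, fun φ hφ hc h0 => ?_⟩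
  refine weak_c1 _ _ hF (hB.sub hQ) ?_ φ hφ hc h0
  intro φ hφ hc h0
  have := hsol φ hφ hc (subset_univ _) h0
  simp only [setIntegral_univ] at this
  have i1 : Integrable (fun x => b x * ‖gradient u x‖ ^ α * φ x) := by
    have := hB.integrable_smul_right_of_hasCompactSupport hφ.continuous hc
    simpa [smul_eq_mul, mul_comm] using this
  have i2 : Integrable (fun x => q x * g (u x) * φ x) := by
    have := hQ.integrable_smul_right_of_hasCompactSupport hφ.continuous hc
    simpa [smul_eq_mul, mul_comm] using this
  have e : ∫ x, ((fun x => b x * ‖gradient u x‖ ^ α) - fun x => q x * g (u x)) x * φ x =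
      (∫ x, b x * ‖gradient u x‖ ^ α * φ x) - ∫ x, q x * g (u x) * φ x := by
    rw [← integral_sub i1 i2]
    congr 1; ext x; simp only [Pi.sub_apply]; ring
  rw [e]; linarith

lemma young_aux {p K D w ε : ℝ} (hp : 1 < p) (hK : 0 ≤ K) (hD : 0 ≤ D) (hw : 0 ≤ w) (hε : 0 < ε) :
    K * D ^ (p - 1) * w ≤ ε * D ^ p + K * (K / ε) ^ (p - 1) * w ^ p := by
  have e1 : ∀ t : ℝ, 0 ≤ t → t ^ p = t ^ (p - 1) * t := fun t ht => by
    have := Real.rpow_add_one' ht (y := p - 1) (by linarith)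
    simpa using this
  rcases le_total (K * w) (ε * D) with h | h
  · have h1 : K * D ^ (p - 1) * w ≤ ε * D ^ p := by
      rw [e1 D hD]
      have := mul_le_mul_of_nonneg_left h (Real.rpow_nonneg hD (p - 1))
      nlinarith
    have : 0 ≤ K * (K / ε) ^ (p - 1) * w ^ p := by positivity
    linarith
  · have h1 : D ≤ K / ε * w := by
      rw [div_mul_eq_mul_div, le_div_iff₀ hε]; linarith
    have h2 : D ^ (p - 1) ≤ (K / ε) ^ (p - 1) * w ^ (p - 1) := by
      rw [← Real.mul_rpow (by positivity) hw]
      exact Real.rpow_le_rpow hD h1 (by linarith)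
    have h3 : K * D ^ (p - 1) * w ≤ K * (K / ε) ^ (p - 1) * w ^ p := by
      rw [e1 w hw]
      have := mul_le_mul_of_nonneg_left h2 (mul_nonneg hK hw)
      nlinarith
    have : 0 ≤ ε * D ^ p := by positivity
    linarith

lemma pow_interp {p α D : ℝ} (hp : 1 < p) (h1 : p - 1 ≤ α) (h2 : α ≤ p) (hD : 0 ≤ D) :
    D ^ α ≤ D ^ (p - 1) + D ^ p := by
  have a1 : 0 ≤ D ^ (p - 1) := by positivity
  have a2 : 0 ≤ D ^ p := by positivity
  rcases le_total D 1 with h | h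
  · have := Real.rpow_le_rpow_of_exponent_ge' hD h (by linarith) h1
    linarith
  · have := Real.rpow_le_rpow_of_exponent_le h h2
    linarith

/-- The standing assumptions. -/
structure Sol (n : ℕ) (p C₁ C₂ α : ℝ) (A : Euc n → Euc n → Euc n) (b q : Euc n → ℝ)
    (g : ℝ → ℝ) (u : Euc n → ℝ) : Prop where
  hn : 2 ≤ n
  hp : 1 < p
  hC₁ : 0 < C₁
  hC₂ : 0 < C₂
  hα₁ : p - 1 ≤ α
  hα₂ : α ≤ p
  hA : StructCond A p C₁ C₂
  hbm : Measurable b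
  hb0 : ∀ x, 0 ≤ b x
  hbl : LocBdd b
  hqm : Measurable q
  hq0 : ∀ x, 0 ≤ q x
  hql : LocBdd q
  hg : ContinuousOn g (Set.Ici 0)
  hg0 : ∀ t ∈ Set.Ici (0 : ℝ), 0 ≤ g t
  hgp : ∀ t : ℝ, 0 < t → 0 < g t
  hu : ContDiff ℝ 1 u
  hu0 : ∀ x, 0 ≤ u x
  hsol : IsWeakSol A b α (fun x => q x * g (u x)) Set.univ u

lemma Sol.energy {n : ℕ} {p C₁ C₂ α : ℝ} {A : Euc n → Euc n → Euc n} {b q : Euc n → ℝ}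
    {g : ℝ → ℝ} {u : Euc n → ℝ} (S : Sol n p C₁ C₂ α A b q g u)
    {z : Euc n → ℝ} (hz : ContDiff ℝ 1 z) {y : Euc n} {δ s : ℝ}
    (hs : ∀ x ∈ sphere y δ, z x < s) (P : Euc n → ℝ) (hP : Integrable P)
    (hle : ∀ᵐ x, P x ≤ 2 * trunc z y δ s x * ⟪A x (gradient u x), gradient z x⟫ -
      (b x * ‖gradient u x‖ ^ α - q x * g (u x)) * trunc z y δ s x ^ (2:ℝ)) :
    ∫ x, P x ≤ 0 := by
  obtain ⟨hF, hc, ht⟩ := sol_test S.hp S.hα₁ S.hA S.hbm S.hb0 S.hbl S.hqm S.hq0 S.hql S.hg S.hu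
    S.hu0 S.hsol
  have hcd := trunc_pow_contDiff hz hs (m := 2) (by norm_num)
  have hcs := trunc_pow_hcs (z := z) (y := y) (δ := δ) (s := s) (m := 2) (by norm_num)
  have h1 := ht _ hcd hcs (fun x => Real.rpow_nonneg (trunc_nonneg x) _)
  have i2 : Integrable fun x => (b x * ‖gradient u x‖ ^ α - q x * g (u x)) *
      trunc z y δ s x ^ (2:ℝ) := by
    have := hc.integrable_smul_right_of_hasCompactSupport hcd.continuous hcs
    simpa [smul_eq_mul, mul_comm] using this
  have hg2 := trunc_pow_gradient hz hs (m := 2) (by norm_num)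
  have e1 : ∀ x, ⟪A x (gradient u x), gradient (fun x => trunc z y δ s x ^ (2:ℝ)) x⟫ =
      2 * trunc z y δ s x * ⟪A x (gradient u x), gradient z x⟫ := by
    intro x
    rw [hg2 x, inner_smul_right]
    norm_num
  have i1 : Integrable fun x => 2 * trunc z y δ s x * ⟪A x (gradient u x), gradient z x⟫ := by
    have hw : Continuous fun x => 2 * trunc z y δ s x :=
      continuous_const.mul (trunc_continuous hz.continuous hs)
    have hK := isCompact_closedBall y δ
    have hFi : IntegrableOn (fun x => A x (gradient u x)) (closedBall y δ) :=
      (locallyIntegrable_iff.1 hF) _ hK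
    obtain ⟨C, hC⟩ := hK.exists_bound_of_continuousOn
      (hw.smul (gradient_continuous hz)).continuousOn
    have : IntegrableOn (fun x => 2 * trunc z y δ s x * ⟪A x (gradient u x), gradient z x⟫)
        (closedBall y δ) := by
      refine Integrable.mono' (hFi.norm.mul_const C) ?_ ?_
      · exact (hw.aestronglyMeasurable.mul
          (hFi.aestronglyMeasurable.inner (gradient_continuous hz).aestronglyMeasurable))
      · filter_upwards [ae_restrict_mem hK.measurableSet] with x hx
        have h3 := hC x hx
        rw [Pi.smul_apply', norm_smul] at h3
        rw [norm_mul]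
        have h4 := norm_inner_le_norm (𝕜 := ℝ) (A x (gradient u x)) (gradient z x)
        calc ‖2 * trunc z y δ s x‖ * ‖⟪A x (gradient u x), gradient z x⟫‖
            ≤ ‖2 * trunc z y δ s x‖ * (‖A x (gradient u x)‖ * ‖gradient z x‖) := by gcongr
          _ = ‖A x (gradient u x)‖ * (‖2 * trunc z y δ s x‖ * ‖gradient z x‖) := by ring
          _ ≤ _ := by gcongr
    refine (integrableOn_iff_integrable_of_support_subset ?_).1 this
    intro x hx
    by_contra h
    apply hx
    simp only []
    rw [trunc_of_notMem fun h' => h (ball_subset_closedBall h')]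
    ring
  have h2 := integral_mono_ae hP (i1.sub i2) hle
  rw [integral_sub' i1 i2] at h2
  simp_rw [e1] at h1
  linarith

lemma euc_nontrivial {n : ℕ} (hn : 2 ≤ n) : Nontrivial (Euc n) := by
  have : Nonempty (Fin n) := ⟨⟨0, by omega⟩⟩
  infer_instance

lemma le_sphMax {n : ℕ} {u : Euc n → ℝ} (hu : Continuous u) {ρ : ℝ} {x : Euc n} (hx : ‖x‖ = ρ) :
    u x ≤ sphMax u ρ :=
  le_csSup ((isCompact_sphere (0 : Euc n) ρ).image hu).bddAbove
    (mem_image_of_mem _ (by simpa using hx))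

lemma exists_sphMax {n : ℕ} (hn : 2 ≤ n) {u : Euc n → ℝ} (hu : Continuous u) {ρ : ℝ}
    (hρ : 0 ≤ ρ) : ∃ x, ‖x‖ = ρ ∧ u x = sphMax u ρ := by
  have := euc_nontrivial hn
  obtain ⟨x, hx, h⟩ := (isCompact_sphere (0 : Euc n) ρ).exists_sSup_image_eq
    (NormedSpace.sphere_nonempty.2 hρ) hu.continuousOn
  exact ⟨x, by simpa using hx, h.symm⟩


open scoped Topology

set_option maxHeartbeats 1600000 in
/-- Maximum principle. -/
lemma Sol.maxp {n : ℕ} {p C₁ C₂ α : ℝ} {A : Euc n → Euc n → Euc n} {b q : Euc n → ℝ}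
    {g : ℝ → ℝ} {u : Euc n → ℝ} (S : Sol n p C₁ C₂ α A b q g u) {ρ : ℝ} (hρ : 0 < ρ)
    {x : Euc n} (hx : ‖x‖ ≤ ρ) : u x ≤ sphMax u ρ := by
  have := euc_nontrivial S.hn
  have hp := S.hp
  have hC₁ := S.hC₁
  have huc := S.hu.continuous
  have hgc := gradient_continuous S.hu
  by_contra hcon
  push Not at hcon
  obtain ⟨x1, hx1, hmax⟩ := (isCompact_closedBall (0 : Euc n) ρ).exists_isMaxOn
    ⟨x, by simpa using hx⟩ huc.continuousOn
  have hxm : u x ≤ u x1 := hmax (by simpa using hx)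
  set M := sphMax u ρ with hM
  set m := u x1 with hm
  have hMm : M < m := lt_of_lt_of_le hcon hxm
  have hx1b : x1 ∈ ball (0 : Euc n) ρ := by
    rw [mem_closedBall_zero_iff] at hx1
    rw [mem_ball_zero_iff]
    refine lt_of_le_of_ne hx1 fun h => ?_
    have := le_sphMax huc h
    linarith
  obtain ⟨B0, hB0⟩ := S.hbl _ (isCompact_closedBall (0 : Euc n) ρ)
  set B := max B0 0 with hB
  have hBn : 0 ≤ B := le_max_right _ _
  have hbB : ∀ x ∈ ball (0 : Euc n) ρ, b x ≤ B := fun x hx =>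
    (hB0 x (ball_subset_closedBall hx)).trans (le_max_left _ _)
  obtain ⟨Cs, hCs, hsob⟩ := sob_set n S.hn
  set C' := B * (B / (C₁ / 2)) ^ (p - 1) with hC'
  have hC'n : 0 ≤ C' := by positivity
  -- super-level sets
  let T : ℝ → Set (Euc n) := fun s => {x | x ∈ ball (0 : Euc n) ρ ∧ s < u x ∧ gradient u x ≠ 0}
  have hTo : ∀ s, IsOpen (T s) := fun s =>
    isOpen_ball.inter ((isOpen_lt continuous_const huc).inter (isOpen_ne_fun hgc continuous_const))
  have hTf : ∀ s, volume (T s) ≠ ⊤ := fun s =>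
    ((measure_mono (fun x hx => hx.1)).trans_lt measure_ball_lt_top).ne
  let sq : ℕ → ℝ := fun k => m - (m - M) / (k + 2)
  have hsq1 : ∀ k, M < sq k := by
    intro k
    have : (m - M) / (k + 2) < m - M := by
      rw [div_lt_iff₀ (by positivity)]
      have : (0:ℝ) ≤ k := by positivity
      nlinarith
    simp only [sq]; linarith
  have hsq2 : ∀ k, sq k < m := by
    intro k
    have : 0 < (m - M) / (k + 2) := by
      apply div_pos (by linarith) (by positivity)
    simp only [sq]; linarith
  have hsqmono : Monotone sq := by
    intro i j hij
    simp only [sq]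
    have : (m - M) / (j + 2) ≤ (m - M) / (i + 2) := by
      apply div_le_div_of_nonneg_left (by linarith) (by positivity)
      have : (i:ℝ) ≤ j := by exact_mod_cast hij
      linarith
    linarith
  have hsqlim : Tendsto sq atTop (𝓝 m) := by
    have h1 : Tendsto (fun k : ℕ => (k:ℝ) + 2) atTop atTop :=
      tendsto_atTop_add_const_right _ _ tendsto_natCast_atTop_atTop
    have h2 := (tendsto_const_nhds (x := m)).sub ((tendsto_const_nhds (x := m - M)).div_atTop h1)
    simpa using h2
  have hTlim : Tendsto (fun k => volume.real (T (sq k))) atTop (𝓝 0) := by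
    have h1 := tendsto_measure_iInter_atTop (μ := volume) (s := fun k => T (sq k))
      (fun k => (hTo _).measurableSet.nullMeasurableSet)
      (fun i j hij x hx => ⟨hx.1, lt_of_le_of_lt (hsqmono hij) hx.2.1, hx.2.2⟩) ⟨0, hTf _⟩
    have h2 : ⋂ k, T (sq k) = ∅ := by
      rw [eq_empty_iff_forall_notMem]
      intro y hy
      rw [mem_iInter] at hy
      have hyb := (hy 0).1
      have hge : m ≤ u y := le_of_tendsto' hsqlim fun k => (hy k).2.1.le
      have hloc : IsLocalMax u y := by
        filter_upwards [isOpen_ball.mem_nhds hyb] with w hw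
        exact (hmax (ball_subset_closedBall hw)).trans hge
      apply (hy 0).2.2
      unfold gradient
      rw [hloc.fderiv_eq_zero, map_zero]
    rw [h2, measure_empty] at h1
    have := (ENNReal.tendsto_toReal ENNReal.zero_ne_top).comp h1
    exact this
  have hlim2 : Tendsto (fun k => Cs * (volume.real (T (sq k))) ^ (1 / (n:ℝ)) *
      ((p + 1) * (C' / C₁ + 1))) atTop (𝓝 0) := by
    have hn0 : (0:ℝ) < 1 / n := by
      have := S.hn
      have : 0 < n := by omega
      positivity
    have h1 := hTlim.rpow_const (p := 1 / (n:ℝ)) (Or.inr hn0.le)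
    rw [Real.zero_rpow hn0.ne'] at h1
    have := (h1.const_mul Cs).mul_const ((p + 1) * (C' / C₁ + 1))
    simpa using this
  have hlim3 : Tendsto (fun k => B * (m - sq k)) atTop (𝓝 0) := by
    have := ((tendsto_const_nhds (x := m)).sub hsqlim).const_mul B
    simpa using this
  obtain ⟨k, hk1, hk2⟩ := ((hlim2.eventually (gt_mem_nhds (zero_lt_one))).and
    (hlim3.eventually (gt_mem_nhds (show (0:ℝ) < C₁ / 2 by positivity)))).exists
  set s := sq k with hs
  have hsM := hsq1 k
  have hsm := hsq2 k
  rw [← hs] at hsM hsm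
  have hsph : ∀ x ∈ sphere (0 : Euc n) ρ, u x < s := fun x hx =>
    lt_of_le_of_lt (le_sphMax huc (by simpa using hx)) hsM
  set w := trunc u (0 : Euc n) ρ s with hw
  have hwc : Continuous w := trunc_continuous huc hsph
  have hw0 : ∀ x, 0 ≤ w x := fun x => trunc_nonneg x
  have hwd : ∀ x, w x ≤ m - s := by
    intro x
    by_cases hx : x ∈ ball (0 : Euc n) ρ
    · rw [hw, trunc_of_mem hx]
      have : u x ≤ m := hmax (ball_subset_closedBall hx)
      exact max_le (by linarith) (by linarith)
    · rw [hw, trunc_of_notMem hx]; linarith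
  have hwT : ∀ x, w x ≠ 0 → gradient u x ≠ 0 → x ∈ T s := by
    intro x h1 h2
    have hxb : x ∈ ball (0 : Euc n) ρ := by
      by_contra h; exact h1 (trunc_of_notMem h)
    refine ⟨hxb, ?_, h2⟩
    by_contra h
    apply h1
    rw [hw, trunc_of_mem hxb, max_eq_right]
    linarith
  have hDp : Continuous fun x => w x * ‖gradient u x‖ ^ p :=
    hwc.mul (hgc.norm.rpow_const fun _ => Or.inr (by linarith))
  have hDpi : Integrable fun x => w x * ‖gradient u x‖ ^ p :=
    hDp.integrable_of_hasCompactSupport (trunc_hcs.mul_right)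
  have hwp : Continuous fun x => w x ^ (p + 1) := hwc.rpow_const fun _ => Or.inr (by linarith)
  have hwpi : Integrable fun x => w x ^ (p + 1) :=
    hwp.integrable_of_hasCompactSupport (trunc_pow_hcs (by linarith))
  have hind : Integrable ((T s).indicator fun x => w x ^ (p + 1)) :=
    hwpi.indicator (hTo s).measurableSet
  have hindn : ∀ x, 0 ≤ (T s).indicator (fun x => w x ^ (p + 1)) x := fun x =>
    indicator_nonneg (fun x _ => Real.rpow_nonneg (hw0 x) _) x
  have hpp : ∀ t : ℝ, 0 ≤ t → t ^ (p + 1) = t ^ p * t := fun t ht =>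
    Real.rpow_add_one' ht (by linarith)
  have hE : C₁ * ∫ x, w x * ‖gradient u x‖ ^ p ≤ C' * ∫ x in T s, w x ^ (p + 1) := by
    have := S.energy S.hu hsph
      (fun x => C₁ * (w x * ‖gradient u x‖ ^ p) - C' * (T s).indicator (fun x => w x ^ (p + 1)) x)
      ((hDpi.const_mul _).sub (hind.const_mul _)) (Eventually.of_forall fun x => ?_)
    · rw [integral_sub (hDpi.const_mul _) (hind.const_mul _), integral_const_mul,
        integral_const_mul, integral_indicator (hTo s).measurableSet] at this
      linarith
    rw [← hw]
    have c1 := (S.hA.2 x (gradient u x)).1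
    rw [real_inner_comm] at c1
    set D := ‖gradient u x‖ with hD
    have hD0 : 0 ≤ D := norm_nonneg _
    have h2 : w x ^ (2:ℝ) = w x * w x := by rw [Real.rpow_two]; ring
    by_cases hxb : x ∈ ball (0 : Euc n) ρ
    swap
    · have : w x = 0 := trunc_of_notMem hxb
      have h3 := hindn x
      rw [h2, this]
      simp only [zero_mul, mul_zero, sub_zero, zero_sub]
      have : 0 ≤ C' * (T s).indicator (fun x => w x ^ (p + 1)) x := mul_nonneg hC'n h3
      linarith
    have hq : 0 ≤ q x * g (u x) := mul_nonneg (S.hq0 x) (S.hg0 _ (S.hu0 x))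
    have hbx := hbB x hxb
    have hIntg := pow_interp hp S.hα₁ S.hα₂ hD0
    have hDa : 0 ≤ D ^ α := by positivity
    have hy : w x * (B * D ^ (p - 1) * w x) ≤ w x * (C₁ / 2 * D ^ p) +
        C' * (T s).indicator (fun x => w x ^ (p + 1)) x := by
      by_cases h0 : w x = 0
      · rw [h0]; simp only [zero_mul, zero_add]; exact mul_nonneg hC'n (hindn x)
      by_cases h1 : gradient u x = 0
      · have : D = 0 := by rw [hD, h1, norm_zero]
        rw [this, Real.zero_rpow (by linarith), Real.zero_rpow (by linarith)]
        simp only [zero_mul, mul_zero, zero_add]; exact mul_nonneg hC'n (hindn x)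
      rw [indicator_of_mem (hwT x h0 h1), hpp _ (hw0 x)]
      have := young_aux hp hBn hD0 (hw0 x) (show 0 < C₁ / 2 by positivity)
      rw [← hC'] at this
      have := mul_le_mul_of_nonneg_left this (hw0 x)
      linarith [mul_add (w x) (C₁ / 2 * D ^ p) (C' * w x ^ p)]
    have hBw : B * w x ≤ C₁ / 2 := by
      have := mul_le_mul_of_nonneg_left (hwd x) hBn
      linarith
    have hDp0 : 0 ≤ D ^ p := by positivity
    have hwx := hw0 x
    have k1 : b x * D ^ α * (w x * w x) ≤ B * (D ^ (p - 1) + D ^ p) * (w x * w x) := by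
      gcongr
    have k2 : B * D ^ p * (w x * w x) ≤ C₁ / 2 * (w x * D ^ p) := by
      have := mul_le_mul_of_nonneg_right hBw (mul_nonneg hwx hDp0)
      nlinarith
    have k3 : w x * (C₁ * D ^ p) ≤ w x * ⟪A x (gradient u x), gradient u x⟫ :=
      mul_le_mul_of_nonneg_left c1 hwx
    have k4 : 0 ≤ q x * g (u x) * (w x * w x) := by positivity
    rw [h2]
    nlinarith
  have hgrad : ∀ x, ‖gradient (fun x => w x ^ (p + 1)) x‖ ≤ (p + 1) *
      (w x * ‖gradient u x‖ ^ p + (T s).indicator (fun x => w x ^ (p + 1)) x) := by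
    intro x
    rw [trunc_pow_gradient S.hu hsph (by linarith), ← hw, norm_smul]
    have hwx := hw0 x
    rw [Real.norm_of_nonneg (by positivity), mul_assoc]
    gcongr
    rw [add_sub_cancel_right]
    set D := ‖gradient u x‖ with hD
    have hD0 : 0 ≤ D := norm_nonneg _
    by_cases h0 : w x = 0
    · rw [h0, Real.zero_rpow (by linarith)]; simpa using hindn x
    by_cases h1 : gradient u x = 0
    · have : D = 0 := by rw [hD, h1, norm_zero]
      rw [this, Real.zero_rpow (by linarith)]; simpa using hindn x
    rw [indicator_of_mem (hwT x h0 h1), hpp _ (hw0 x)]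
    rcases le_total D (w x) with h | h
    · have : w x ^ p * D ≤ w x ^ p * w x := by gcongr
      have : 0 ≤ w x * D ^ p := by positivity
      linarith
    · have e1 : ∀ t : ℝ, 0 ≤ t → t ^ p = t ^ (p - 1) * t := fun t ht => by
        have := Real.rpow_add_one' ht (y := p - 1) (by linarith)
        simpa using this
      have : w x ^ (p - 1) ≤ D ^ (p - 1) := Real.rpow_le_rpow hwx h (by linarith)
      have h3 : w x ^ p * D ≤ w x * D ^ p := by
        rw [e1 _ hwx, e1 _ hD0]
        have := mul_le_mul_of_nonneg_right this (mul_nonneg hwx hD0)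
        nlinarith
      have : 0 ≤ w x ^ p * w x := by positivity
      linarith
  have hsob1 := hsob _ (trunc_pow_contDiff S.hu hsph (m := p + 1) (by linarith))
    (trunc_pow_hcs (by linarith)) (fun x => Real.rpow_nonneg (hw0 x) _) (T s) (hTf s)
  rw [← hw] at hsob1
  set J := ∫ x in T s, w x ^ (p + 1) with hJ
  have hJ0 : 0 ≤ J := integral_nonneg fun x => Real.rpow_nonneg (hw0 x) _
  have hE2 : ∫ x, w x * ‖gradient u x‖ ^ p ≤ C' / C₁ * J := by
    rw [div_mul_eq_mul_div, le_div_iff₀ hC₁]; linarith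
  have hG : ∫ x, ‖gradient (fun x => w x ^ (p + 1)) x‖ ≤ (p + 1) * (C' / C₁ + 1) * J := by
    calc ∫ x, ‖gradient (fun x => w x ^ (p + 1)) x‖ ≤ ∫ x, (p + 1) *
      (w x * ‖gradient u x‖ ^ p + (T s).indicator (fun x => w x ^ (p + 1)) x) := by
          refine integral_mono_of_nonneg (Eventually.of_forall fun x => norm_nonneg _)
            ((hDpi.add hind).const_mul _) (Eventually.of_forall hgrad)
      _ = (p + 1) * (∫ x, w x * ‖gradient u x‖ ^ p) + (p + 1) * J := by
          rw [integral_const_mul, integral_add hDpi hind, integral_indicator (hTo s).measurableSet]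
          ring
      _ ≤ _ := by
          have := mul_le_mul_of_nonneg_left hE2 (show 0 ≤ p + 1 by linarith)
          nlinarith
  have hJz : J = 0 := by
    have hv : 0 ≤ Cs * volume.real (T s) ^ (1 / (n:ℝ)) := by positivity
    have h1 := hsob1.trans (mul_le_mul_of_nonneg_left hG hv)
    have h2 : J ≤ (Cs * volume.real (T s) ^ (1 / (n:ℝ)) * ((p + 1) * (C' / C₁ + 1))) * J := by
      nlinarith
    by_contra h
    have : 0 < J := lt_of_le_of_ne hJ0 (Ne.symm h)
    nlinarith
  have hI0 : ∫ x, w x * ‖gradient u x‖ ^ p = 0 := by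
    refine le_antisymm (by rw [hJz] at hE2; simpa using hE2) (integral_nonneg fun x => ?_)
    exact mul_nonneg (hw0 x) (by positivity)
  have hz : ∀ x, w x * ‖gradient u x‖ ^ p = 0 := by
    have h1 := (integral_eq_zero_iff_of_nonneg
      (fun x => mul_nonneg (hw0 x) (by positivity)) hDpi).1 hI0
    have h2 := (hDp.ae_eq_iff_eq volume continuous_const).1 h1
    exact fun x => congrFun h2 x
  have hconst : ∀ x y, w x ^ (2:ℝ) = w y ^ (2:ℝ) := by
    intro x y
    refine is_const_of_fderiv_eq_zero (𝕜 := ℝ) (f := fun x => w x ^ (2:ℝ))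
      ((trunc_pow_contDiff S.hu hsph (m := 2) (by norm_num)).differentiable (by norm_num)) ?_ x y
    intro x
    have := (trunc_pow_hasFDerivAt S.hu hsph (m := 2) (by norm_num) x).fderiv
    rw [← hw] at this
    rw [this]
    rcases mul_eq_zero.1 (hz x) with h | h
    · rw [h]; norm_num
    · have h3 : gradient u x = 0 := by
        rw [Real.rpow_eq_zero (norm_nonneg _) (by linarith)] at h
        exact norm_eq_zero.1 h
      have : fderiv ℝ u x = 0 := by
        unfold gradient at h3
        simpa using h3
      rw [this, smul_zero]
  obtain ⟨y, hy⟩ := NormedSpace.sphere_nonempty (x := (0 : Euc n)) (r := ρ) |>.2 hρ.le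
  have hwy : w y = 0 := trunc_of_notMem (by
    rw [mem_sphere] at hy; rw [mem_ball]; linarith)
  have hwx : w x1 = m - s := by
    rw [hw, trunc_of_mem hx1b, max_eq_left]; linarith
  have := hconst x1 y
  rw [hwy, hwx, Real.zero_rpow (by norm_num), Real.rpow_two] at this
  have : 0 < m - s := by linarith
  nlinarith

open scoped Topology

lemma degiorgi {n : ℕ} (hn : 2 ≤ n) {Y : ℝ → ℝ} {E h : ℝ} (hE : 0 ≤ E) (hh : 0 < h)
    (hY0 : ∀ s, 0 ≤ Y s) (hanti : ∀ s t, 0 ≤ s → s ≤ t → Y t ≤ Y s)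
    (hY : ∀ s d, 0 ≤ s → 0 < d → Y (s + d) ≤ (E / d) * (Y s / d) ^ (1 / (n:ℝ)) * Y s)
    (hsm : (8 * E / h) * (8 * Y (h / 4) / h) ^ (1 / (n:ℝ)) ≤ (1 / 4 : ℝ) ^ n) :
    Y (h / 2) = 0 := by
  have hnp : (0:ℝ) < n := by
    have : 0 < n := by omega
    exact_mod_cast this
  have hν : (0:ℝ) ≤ 1 / n := by positivity
  set r : ℝ := (1 / 4 : ℝ) ^ n with hr
  have hr0 : 0 < r := by positivity
  have hr1 : r < 1 := pow_lt_one₀ (by norm_num) (by norm_num) (by omega)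
  let s : ℕ → ℝ := fun i => h / 2 - h / (4 * 2 ^ i)
  have hs0 : ∀ i, 0 ≤ s i := by
    intro i
    have : h / (4 * 2 ^ i) ≤ h / 4 := by
      apply div_le_div_of_nonneg_left hh.le (by norm_num)
      have : (1:ℝ) ≤ 2 ^ i := one_le_pow₀ (by norm_num)
      linarith
    simp only [s]; linarith
  have hsd : ∀ i, s (i + 1) = s i + h / (8 * 2 ^ i) := by
    intro i
    simp only [s, pow_succ]
    field_simp
    ring
  have key : ∀ i, Y (s i) ≤ Y (h / 4) * r ^ i := by
    intro i
    induction i with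
    | zero => simp only [s, pow_zero, mul_one]; rw [show h / 2 - h / 4 = h / 4 by ring]
    | succ i ih =>
      rw [hsd i]
      have hd : 0 < h / (8 * 2 ^ i) := by positivity
      refine (hY (s i) _ (hs0 i) hd).trans ?_
      have h1 : Y (s i) / (h / (8 * 2 ^ i)) ≤ (8 * Y (h / 4) / h) * (2 * r) ^ i := by
        calc Y (s i) / (h / (8 * 2 ^ i)) ≤ (Y (h / 4) * r ^ i) / (h / (8 * 2 ^ i)) := by gcongr
          _ = _ := by rw [mul_pow]; field_simp
      have h2 : (Y (s i) / (h / (8 * 2 ^ i))) ^ (1 / (n:ℝ)) ≤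
          (8 * Y (h / 4) / h) ^ (1 / (n:ℝ)) * (1 / 2) ^ i := by
        have hYq := hY0 (h / 4)
        refine (Real.rpow_le_rpow (div_nonneg (hY0 _) hd.le) h1 hν).trans ?_
        rw [Real.mul_rpow (by positivity) (by positivity)]
        gcongr
        have e1 : ((2 * r) ^ i) ^ (1 / (n:ℝ)) = ((2 * r) ^ (1 / (n:ℝ))) ^ i := by
          exact (Real.rpow_pow_comm (by positivity) _ _).symm
        rw [e1]
        gcongr
        have : (2 * r) ≤ (1 / 2 : ℝ) ^ n := by
          have h4 : r = (1 / 2 : ℝ) ^ n * (1 / 2) ^ n := by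
            rw [hr, ← mul_pow]; norm_num
          have h5 : (1 / 2 : ℝ) ^ n ≤ (1 / 2) ^ 1 :=
            pow_le_pow_of_le_one (by norm_num) (by norm_num) (by omega)
          have h6 : (0:ℝ) < (1 / 2) ^ n := by positivity
          rw [h4]; nlinarith
        refine (Real.rpow_le_rpow (by positivity) this hν).trans ?_
        rw [← Real.rpow_natCast, ← Real.rpow_mul (by norm_num), mul_one_div_cancel hnp.ne',
          Real.rpow_one]
      have hYi := hY0 (s i)
      have hYq := hY0 (h / 4)
      calc E / (h / (8 * 2 ^ i)) * (Y (s i) / (h / (8 * 2 ^ i))) ^ (1 / (n:ℝ)) * Y (s i)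
          ≤ E / (h / (8 * 2 ^ i)) * ((8 * Y (h / 4) / h) ^ (1 / (n:ℝ)) * (1 / 2) ^ i) *
            (Y (h / 4) * r ^ i) := by gcongr
        _ = ((8 * E / h) * (8 * Y (h / 4) / h) ^ (1 / (n:ℝ))) * (Y (h / 4) * r ^ i) := by
            have : (2:ℝ) ^ i * (1 / 2) ^ i = 1 := by rw [← mul_pow]; norm_num
            have h3 : E / (h / (8 * 2 ^ i)) = (8 * E / h) * 2 ^ i := by field_simp
            rw [h3]
            calc _ = ((8 * E / h) * (8 * Y (h / 4) / h) ^ (1 / (n:ℝ))) * (Y (h / 4) * r ^ i) *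
                  ((2:ℝ) ^ i * (1 / 2) ^ i) := by ring
              _ = _ := by rw [this, mul_one]
        _ ≤ r * (Y (h / 4) * r ^ i) := by gcongr
        _ = Y (h / 4) * r ^ (i + 1) := by ring
  have hlim : Tendsto (fun i : ℕ => Y (h / 4) * r ^ i) atTop (𝓝 0) := by
    have := (tendsto_pow_atTop_nhds_zero_of_lt_one hr0.le hr1).const_mul (Y (h / 4))
    simpa using this
  refine le_antisymm (ge_of_tendsto' hlim fun i => ?_) (hY0 _)
  refine (hanti (s i) (h / 2) (hs0 i) ?_).trans (key i)
  simp only [s]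
  have : 0 < h / (4 * 2 ^ i) := by positivity
  linarith

section
variable {n : ℕ} {p C₁ C₂ α : ℝ} {A : Euc n → Euc n → Euc n} {b q : Euc n → ℝ}
    {g : ℝ → ℝ} {u : Euc n → ℝ}

/-- The barrier function. -/
def zfun {n : ℕ} (u : Euc n → ℝ) (x0 : Euc n) (δ h : ℝ) : Euc n → ℝ :=
  fun x => u x - (u x0 - h) - 4 * h / δ ^ 2 * ‖x - x0‖ ^ 2

lemma zfun_contDiff (hu : ContDiff ℝ 1 u) (x0 : Euc n) (δ h : ℝ) :
    ContDiff ℝ 1 (zfun u x0 δ h) := by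
  unfold zfun
  exact (hu.sub contDiff_const).sub
    (contDiff_const.mul ((contDiff_id.sub contDiff_const).norm_sq ℝ))

lemma zfun_gradient (hu : ContDiff ℝ 1 u) (x0 : Euc n) (δ h : ℝ) (x : Euc n) :
    gradient (zfun u x0 δ h) x = gradient u x - (8 * h / δ ^ 2) • (x - x0) := by
  have h1 : HasGradientAt u (gradient u x) x :=
    (hu.differentiable (by norm_num) x).hasGradientAt
  rw [HasGradientAt.gradient]
  rw [hasGradientAt_iff_hasFDerivAt] at h1 ⊢
  have h2 : HasFDerivAt (fun x : Euc n => ‖x - x0‖ ^ 2) _ x :=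
    ((hasFDerivAt_id x).sub_const x0).norm_sq
  refine ((h1.sub_const (u x0 - h)).sub (h2.const_mul (4 * h / δ ^ 2))).congr_fderiv ?_
  ext v
  simp [inner_sub_left, inner_smul_left]
  ring

lemma Sol.kl_energy (S : Sol n p C₁ C₂ α A b q g u) {x0 : Euc n} {δ h a B : ℝ} (hδ : 0 < δ)
    (hh : 0 < h) (ha : 0 ≤ a) (hB : 0 ≤ B)
    (hle : ∀ᵐ x, x ∈ ball x0 δ → b x ≤ B ∧ (u x0 - h < u x → a ≤ q x * g (u x)))
    (hβ : B * h * (h / δ) ^ (α - p) ≤ C₁ / 2)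
    (hcon : ∀ x ∈ closedBall x0 δ, u x ≤ u x0 + h) {C3 : ℝ}
    (hC3 : C3 = (16 * C₂ + C₁) * ((16 * C₂ + C₁) / (C₁ / 2)) ^ (p - 1)) {s : ℝ} (hs : 0 ≤ s) :
    (a * ∫ x, trunc (zfun u x0 δ h) x0 δ s x ^ (2:ℝ) ≤
      C3 * (h / δ) ^ p * ∫ x, trunc (zfun u x0 δ h) x0 δ s x) ∧
    ∫ x, ‖gradient (fun x => trunc (zfun u x0 δ h) x0 δ s x ^ (2:ℝ)) x‖ ≤
      2 * (h / δ) * (9 + 2 * C3 / C₁) * ∫ x, trunc (zfun u x0 δ h) x0 δ s x := by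
  have hp := S.hp
  have hC₁ := S.hC₁
  have hC₂ := S.hC₂
  have hgc := gradient_continuous S.hu
  set z := zfun u x0 δ h with hz
  have hzd : ContDiff ℝ 1 z := zfun_contDiff S.hu _ _ _
  set K := h / δ with hK
  have hK0 : 0 < K := by positivity
  have hsph : ∀ x ∈ sphere x0 δ, z x < s := by
    intro x hx
    have h1 := hcon x (sphere_subset_closedBall hx)
    have h2 : ‖x - x0‖ = δ := by rw [← dist_eq_norm]; exact hx
    have h3 : 4 * h / δ ^ 2 * δ ^ 2 = 4 * h := by field_simp
    simp only [hz, zfun]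
    rw [h2, h3]; linarith
  set w := trunc z x0 δ s with hw
  have hwc : Continuous w := trunc_continuous hzd.continuous hsph
  have hw0 : ∀ x, 0 ≤ w x := fun x => trunc_nonneg x
  have hwi : Integrable w := hwc.integrable_of_hasCompactSupport trunc_hcs
  have hDp : Continuous fun x => w x * (‖gradient u x‖ / K) ^ p :=
    hwc.mul ((hgc.norm.div_const _).rpow_const fun _ => Or.inr (by linarith))
  have hDpi : Integrable fun x => w x * (‖gradient u x‖ / K) ^ p :=
    hDp.integrable_of_hasCompactSupport (trunc_hcs.mul_right)
  have hw2c : Continuous fun x => w x ^ (2:ℝ) := hwc.rpow_const fun _ => Or.inr (by norm_num)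
  have hw2i : Integrable fun x => w x ^ (2:ℝ) :=
    hw2c.integrable_of_hasCompactSupport (trunc_pow_hcs (by norm_num))
  have hgz : ∀ x ∈ ball x0 δ, ‖(8 * h / δ ^ 2) • (x - x0)‖ ≤ 8 * K := by
    intro x hx
    rw [mem_ball, dist_eq_norm] at hx
    rw [norm_smul, Real.norm_of_nonneg (by positivity)]
    calc 8 * h / δ ^ 2 * ‖x - x0‖ ≤ 8 * h / δ ^ 2 * δ := by gcongr
      _ = 8 * K := by rw [hK]; field_simp
  have hC30 : 0 ≤ C3 := by rw [hC3]; positivity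
  have hE := S.energy hzd hsph
    (fun x => K ^ p * (C₁ / 2 * (w x * (‖gradient u x‖ / K) ^ p) - C3 * w x) + a * w x ^ (2:ℝ))
    ((((hDpi.const_mul _).sub (hwi.const_mul _)).const_mul _).add (hw2i.const_mul _)) (by
      filter_upwards [hle] with x hx
      rw [← hw]
      have h2 : w x ^ (2:ℝ) = w x * w x := by rw [Real.rpow_two]; ring
      by_cases h0 : w x = 0
      · rw [h2, h0]; simp
      have hxb : x ∈ ball x0 δ := by
        by_contra h; exact h0 (trunc_of_notMem h)
      have hzs : w x = z x - s := by
        rw [hw, trunc_of_mem hxb] at h0 ⊢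
        rw [max_eq_left]
        by_contra h
        exact h0 (max_eq_right (by linarith))
      have hwx : 0 < w x := lt_of_le_of_ne (hw0 x) (Ne.symm h0)
      have hnn : 0 ≤ 4 * h / δ ^ 2 * ‖x - x0‖ ^ 2 := by positivity
      have hzx : z x = u x - (u x0 - h) - 4 * h / δ ^ 2 * ‖x - x0‖ ^ 2 := rfl
      have hw2h : w x ≤ 2 * h := by
        have := hcon x (ball_subset_closedBall hxb)
        linarith
      obtain ⟨hbx, hqx⟩ := hx hxb
      have hqx := hqx (by linarith)
      have c1 := (S.hA.2 x (gradient u x)).1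
      have c2 := (S.hA.2 x (gradient u x)).2
      rw [real_inner_comm] at c1
      rw [hz, zfun_gradient S.hu, inner_sub_right]
      have c3 := real_inner_le_norm (A x (gradient u x)) ((8 * h / δ ^ 2) • (x - x0))
      have c4 : ⟪A x (gradient u x), (8 * h / δ ^ 2) • (x - x0)⟫ ≤
          C₂ * ‖gradient u x‖ ^ (p - 1) * (8 * K) :=
        c3.trans (mul_le_mul c2 (hgz x hxb) (norm_nonneg _) (by positivity))
      set D := ‖gradient u x‖ / K with hD
      have hD0 : 0 ≤ D := by positivity
      have hKD : ‖gradient u x‖ = K * D := by rw [hD]; field_simp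
      rw [hKD] at c1 c4 ⊢
      rw [Real.mul_rpow hK0.le hD0] at c1 c4 ⊢
      have hKp : K ^ p = K ^ (p - 1) * K := by
        have := Real.rpow_add_one' hK0.le (y := p - 1) (by linarith)
        simpa using this
      have hKa : K ^ α = K ^ p * K ^ (α - p) := by
        rw [← Real.rpow_add hK0]; congr 1; ring
      have c4' : ⟪A x (gradient u x), (8 * h / δ ^ 2) • (x - x0)⟫ ≤
          K ^ p * (8 * C₂ * D ^ (p - 1)) := by
        refine c4.trans (le_of_eq ?_)
        rw [hKp]; ring
      have hIntg := pow_interp hp S.hα₁ S.hα₂ hD0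
      have hKpp : 0 < K ^ p := by positivity
      have hKaa : 0 < K ^ (α - p) := by positivity
      have hDa : 0 ≤ D ^ α := by positivity
      have k1 : b x * (K ^ α * D ^ α) * (w x * w x) ≤
          w x * K ^ p * (C₁ * (D ^ (p - 1) + D ^ p)) := by
        calc b x * (K ^ α * D ^ α) * (w x * w x)
            ≤ B * (K ^ α * D ^ α) * (w x * (2 * h)) := by gcongr
          _ = w x * K ^ p * (2 * (B * h * K ^ (α - p)) * D ^ α) := by rw [hKa]; ring
          _ ≤ w x * K ^ p * (2 * (C₁ / 2) * (D ^ (p - 1) + D ^ p)) := by gcongr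
          _ = _ := by ring
      have hy := young_aux (w := 1) hp (show 0 ≤ 16 * C₂ + C₁ by positivity) hD0 zero_le_one
        (show 0 < C₁ / 2 by positivity)
      rw [Real.one_rpow, mul_one, mul_one, ← hC3] at hy
      have k2 := mul_le_mul_of_nonneg_left c1 (show 0 ≤ 2 * w x by positivity)
      have k3 := mul_le_mul_of_nonneg_left c4' (show 0 ≤ 2 * w x by positivity)
      have k4 := mul_le_mul_of_nonneg_left hy (show 0 ≤ w x * K ^ p by positivity)
      have k5 := mul_le_mul_of_nonneg_right hqx (show 0 ≤ w x * w x by positivity)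
      rw [h2]
      linear_combination k1 + k2 + k3 + k4 + k5)
  have hi1 : Integrable fun x => C₁ / 2 * (w x * (‖gradient u x‖ / K) ^ p) - C3 * w x :=
    (hDpi.const_mul _).sub (hwi.const_mul _)
  rw [integral_add (hi1.const_mul _) (hw2i.const_mul _),
    integral_const_mul, integral_sub (hDpi.const_mul _) (hwi.const_mul _), integral_const_mul,
    integral_const_mul, integral_const_mul] at hE
  have hKpp : 0 < K ^ p := by positivity
  have hI1 : 0 ≤ ∫ x, w x * (‖gradient u x‖ / K) ^ p :=
    integral_nonneg fun x => mul_nonneg (hw0 x) (by positivity)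
  have hI2 : 0 ≤ ∫ x, w x ^ (2:ℝ) := integral_nonneg fun x => Real.rpow_nonneg (hw0 x) _
  constructor
  · have : 0 ≤ K ^ p * (C₁ / 2 * ∫ x, w x * (‖gradient u x‖ / K) ^ p) := by positivity
    linarith
  have hI3 : C₁ / 2 * (∫ x, w x * (‖gradient u x‖ / K) ^ p) ≤ C3 * ∫ x, w x := by
    have h1 : 0 ≤ a * ∫ x, w x ^ (2:ℝ) := by positivity
    have h2 : K ^ p * (C₁ / 2 * (∫ x, w x * (‖gradient u x‖ / K) ^ p) - C3 * ∫ x, w x) ≤ 0 := by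
      linarith
    have := nonpos_of_mul_nonpos_right h2 hKpp
    linarith
  have hI4 : (∫ x, w x * (‖gradient u x‖ / K) ^ p) ≤ 2 * C3 / C₁ * ∫ x, w x := by
    rw [div_mul_eq_mul_div, le_div_iff₀ hC₁]; linarith
  calc ∫ x, ‖gradient (fun x => w x ^ (2:ℝ)) x‖
      ≤ ∫ x, 2 * K * (9 * w x + w x * (‖gradient u x‖ / K) ^ p) := by
        refine integral_mono_of_nonneg (Eventually.of_forall fun x => norm_nonneg _)
          (((hwi.const_mul _).add hDpi).const_mul _) (Eventually.of_forall fun x => ?_)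
        simp only []
        rw [trunc_pow_gradient hzd hsph (by norm_num), ← hw, norm_smul]
        have hwx := hw0 x
        rw [Real.norm_of_nonneg (by positivity)]
        norm_num
        by_cases hxb : x ∈ ball x0 δ
        swap
        · have : w x = 0 := trunc_of_notMem hxb
          rw [this]; simp
        have h1 : ‖gradient z x‖ ≤ ‖gradient u x‖ + 8 * K := by
          rw [hz, zfun_gradient S.hu]
          exact (norm_sub_le _ _).trans (by linarith [hgz x hxb])
        set D := ‖gradient u x‖ / K with hD
        have hD0 : 0 ≤ D := by positivity
        have hKD : ‖gradient u x‖ = K * D := by rw [hD]; field_simp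
        have hD1 : D ≤ 1 + D ^ p := by
          rcases le_total D 1 with h | h
          · have : 0 ≤ D ^ p := by positivity
            linarith
          · have := Real.self_le_rpow_of_one_le h hp.le
            linarith
        rw [hKD] at h1
        calc 2 * w x * ‖gradient z x‖ ≤ 2 * w x * (K * (1 + D ^ p) + 8 * K) := by
              gcongr
              exact h1.trans (by gcongr)
          _ = _ := by ring
    _ = 2 * K * (9 * (∫ x, w x) + ∫ x, w x * (‖gradient u x‖ / K) ^ p) := by
        rw [integral_const_mul, integral_add (hwi.const_mul _) hDpi, integral_const_mul]
    _ ≤ 2 * K * (9 * (∫ x, w x) + 2 * C3 / C₁ * ∫ x, w x) := by gcongr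
    _ = _ := by ring

end

lemma key_lemma (n : ℕ) (hn : 2 ≤ n) (p C₁ C₂ : ℝ) (hC₁ : 0 < C₁) (hC₂ : 0 < C₂) :
    ∃ Λ : ℝ, 0 < Λ ∧ ∀ (α : ℝ) (A : Euc n → Euc n → Euc n) (b q : Euc n → ℝ)
    (g : ℝ → ℝ) (u : Euc n → ℝ), Sol n p C₁ C₂ α A b q g u →
    ∀ (x0 : Euc n) (δ h a B : ℝ), 0 < δ → 0 < h → 0 < a → 0 ≤ B →
    (∀ᵐ x, x ∈ ball x0 δ → b x ≤ B ∧ (u x0 - h < u x → a ≤ q x * g (u x))) →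
    B * h * (h / δ) ^ (α - p) ≤ C₁ / 2 → Λ * (h / δ) ^ p ≤ a * h →
    ∃ x ∈ closedBall x0 δ, u x0 + h < u x := by
  have hnt := euc_nontrivial hn
  obtain ⟨Cs, hCs, hsob⟩ := sob_set n hn
  obtain ⟨C3, hC3⟩ : ∃ C3, C3 = (16 * C₂ + C₁) * ((16 * C₂ + C₁) / (C₁ / 2)) ^ (p - 1) := ⟨_, rfl⟩
  have hC30 : 0 < C3 := by rw [hC3]; positivity
  obtain ⟨C, hC⟩ : ∃ C, C = 2 * Cs * (9 + 2 * C3 / C₁) := ⟨_, rfl⟩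
  have hC0 : 0 < C := by rw [hC]; positivity
  obtain ⟨ω, hω⟩ : ∃ ω, ω = volume.real (ball (0 : Euc n) 1) := ⟨_, rfl⟩
  have hω0 : 0 < ω := by
    rw [hω]
    exact ENNReal.toReal_pos (measure_ball_pos volume _ one_pos).ne' measure_ball_lt_top.ne
  have hnp : (0:ℝ) < n := by
    have : 0 < n := by omega
    exact_mod_cast this
  refine ⟨64 * C3 * ω * (8 * C * 4 ^ n) ^ n, by positivity, ?_⟩
  intro α A b q g u S x0 δ h a B hδ hh ha hB hle hβ hΛ
  by_contra hcon
  push Not at hcon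
  have huc := S.hu.continuous
  have hen := fun s (hs : 0 ≤ s) => S.kl_energy hδ hh ha.le hB hle hβ hcon hC3 hs
  set z := zfun u x0 δ h with hz
  have hzd : ContDiff ℝ 1 z := zfun_contDiff S.hu _ _ _
  have hK0 : 0 < h / δ := by positivity
  have hsph : ∀ s, 0 ≤ s → ∀ x ∈ sphere x0 δ, z x < s := by
    intro s hs x hx
    have h1 := hcon x (sphere_subset_closedBall hx)
    have h2 : ‖x - x0‖ = δ := by rw [← dist_eq_norm]; exact hx
    have h3 : 4 * h / δ ^ 2 * δ ^ 2 = 4 * h := by field_simp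
    simp only [hz, zfun]
    rw [h2, h3]; linarith
  have hwc : ∀ s, 0 ≤ s → Continuous (trunc z x0 δ s) := fun s hs =>
    trunc_continuous hzd.continuous (hsph s hs)
  have hwi : ∀ s, 0 ≤ s → Integrable (trunc z x0 δ s) := fun s hs =>
    (hwc s hs).integrable_of_hasCompactSupport trunc_hcs
  have hw2i : ∀ s, 0 ≤ s → Integrable (fun x => trunc z x0 δ s x ^ (2:ℝ)) := fun s hs =>
    ((hwc s hs).rpow_const fun _ => Or.inr (by norm_num)).integrable_of_hasCompactSupport
      (trunc_pow_hcs (by norm_num))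
  have hY0 : ∀ s, 0 ≤ ∫ x, trunc z x0 δ s x := fun s => integral_nonneg fun x => trunc_nonneg x
  have hmono : ∀ s t, s ≤ t → ∀ x, trunc z x0 δ t x ≤ trunc z x0 δ s x := by
    intro s t hst x
    by_cases hx : x ∈ ball x0 δ
    · rw [trunc_of_mem hx, trunc_of_mem hx]
      exact max_le_max (by linarith) le_rfl
    · rw [trunc_of_notMem hx, trunc_of_notMem hx]
  -- truncation at a higher level
  have hlev : ∀ s d, 0 < d → ∀ x, d * trunc z x0 δ (s + d) x ≤
      ({x | d < trunc z x0 δ s x}.indicator (fun x => trunc z x0 δ s x ^ (2:ℝ))) x := by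
    intro s d hd x
    have hnn : 0 ≤ ({x | d < trunc z x0 δ s x}.indicator (fun x => trunc z x0 δ s x ^ (2:ℝ))) x :=
      indicator_nonneg (fun x _ => Real.rpow_nonneg (trunc_nonneg x) _) x
    by_cases h0 : trunc z x0 δ (s + d) x = 0
    · rw [h0, mul_zero]; exact hnn
    have hxb : x ∈ ball x0 δ := by
      by_contra h; exact h0 (trunc_of_notMem h)
    have h1 : 0 < z x - (s + d) := by
      by_contra h
      apply h0
      rw [trunc_of_mem hxb, max_eq_right (by linarith)]
    have h2 : trunc z x0 δ s x = z x - s := by rw [trunc_of_mem hxb, max_eq_left (by linarith)]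
    have h3 : trunc z x0 δ (s + d) x = z x - (s + d) := by
      rw [trunc_of_mem hxb, max_eq_left (by linarith)]
    rw [indicator_of_mem (by simp only [mem_setOf_eq, h2]; linarith), h2, h3, Real.rpow_two]
    nlinarith
  have hTm : ∀ s d, 0 ≤ s → MeasurableSet {x | d < trunc z x0 δ s x} := fun s d hs =>
    (isOpen_lt continuous_const (hwc s hs)).measurableSet
  have hstep : ∀ s d, 0 ≤ s → 0 < d → d * ∫ x, trunc z x0 δ (s + d) x ≤
      ∫ x in {x | d < trunc z x0 δ s x}, trunc z x0 δ s x ^ (2:ℝ) := by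
    intro s d hs hd
    rw [← integral_const_mul, ← integral_indicator (hTm s d hs)]
    exact integral_mono ((hwi _ (by linarith)).const_mul _)
      ((hw2i s hs).indicator (hTm s d hs)) (hlev s d hd)
  have hzero := degiorgi (n := n) hn (Y := fun s => ∫ x, trunc z x0 δ s x) (E := C * (h / δ))
    (h := h) (by positivity) hh hY0
    (fun s t hs hst => integral_mono (hwi t (by linarith)) (hwi s hs) (hmono s t hst)) ?_ ?_
  · have hpos := (hwc (h / 2) (by positivity)).integral_pos_of_hasCompactSupport_nonneg_nonzero
      (μ := volume) trunc_hcs (fun x => trunc_nonneg x) (x := x0) (by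
        rw [trunc_of_mem (mem_ball_self hδ)]
        have : z x0 = h := by simp [hz, zfun]
        rw [this, max_eq_left (by linarith)]
        linarith)
    linarith
  · intro s d hs hd
    set T := {x | d < trunc z x0 δ s x} with hT
    have hTf : volume T ≠ ⊤ := by
      refine ((measure_mono (fun x hx => ?_)).trans_lt
        (measure_ball_lt_top (μ := volume) (x := x0) (r := δ))).ne
      by_contra h
      have h1 : d < trunc z x0 δ s x := hx
      rw [trunc_of_notMem h] at h1
      linarith
    have hTY : volume.real T ≤ (∫ x, trunc z x0 δ s x) / d := by
      rw [le_div_iff₀ hd]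
      have h1 : d * volume.real T ≤ ∫ x in T, trunc z x0 δ s x :=
        setIntegral_ge_of_const_le_real (hTm s d hs) hTf (fun x hx => le_of_lt hx)
          (hwi s hs).integrableOn
      have h2 : ∫ x in T, trunc z x0 δ s x ≤ ∫ x, trunc z x0 δ s x :=
        setIntegral_le_integral (hwi s hs) (Eventually.of_forall fun x => trunc_nonneg x)
      linarith
    have h1 := hsob _ (trunc_pow_contDiff hzd (hsph s hs) (m := 2) (by norm_num))
      (trunc_pow_hcs (by norm_num)) (fun x => Real.rpow_nonneg (trunc_nonneg x) _) T hTf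
    have h2 := (hen s hs).2
    have h3 := hstep s d hs hd
    have hYs := hY0 s
    have h4 : d * ∫ x, trunc z x0 δ (s + d) x ≤ Cs * ((∫ x, trunc z x0 δ s x) / d) ^ (1 / (n:ℝ)) *
        (2 * (h / δ) * (9 + 2 * C3 / C₁) * ∫ x, trunc z x0 δ s x) := by
      refine (h3.trans h1).trans ?_
      gcongr
    have h5 : ∫ x, trunc z x0 δ (s + d) x ≤ (Cs * ((∫ x, trunc z x0 δ s x) / d) ^ (1 / (n:ℝ)) *
        (2 * (h / δ) * (9 + 2 * C3 / C₁) * ∫ x, trunc z x0 δ s x)) / d := by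
      rw [le_div_iff₀ hd]; linarith
    refine h5.trans (le_of_eq ?_)
    rw [hC]; ring
  · have hball : volume.real (ball x0 δ) = δ ^ n * ω := by
      rw [measureReal_def, Measure.addHaar_ball _ _ hδ.le, ENNReal.toReal_mul,
        ENNReal.toReal_ofReal (by positivity), hω, measureReal_def, finrank_euclideanSpace_fin]
    have hw0 : ∫ x, trunc z x0 δ 0 x ≤ 2 * h * (δ ^ n * ω) := by
      have h1 : ∫ x, trunc z x0 δ 0 x = ∫ x in ball x0 δ, trunc z x0 δ 0 x := by
        rw [setIntegral_eq_integral_of_forall_compl_eq_zero]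
        exact fun x hx => trunc_of_notMem hx
      rw [h1]
      refine (setIntegral_mono_on (hwi 0 le_rfl).integrableOn
        (integrableOn_const measure_ball_lt_top.ne) measurableSet_ball
        (g := fun _ => 2 * h) fun x hx => ?_).trans ?_
      · rw [trunc_of_mem hx]
        have h2 := hcon x (ball_subset_closedBall hx)
        have hnn : 0 ≤ 4 * h / δ ^ 2 * ‖x - x0‖ ^ 2 := by positivity
        have hzx : z x = u x - (u x0 - h) - 4 * h / δ ^ 2 * ‖x - x0‖ ^ 2 := rfl
        exact max_le (by linarith) (by linarith)
      · rw [setIntegral_const, hball, smul_eq_mul]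
        exact le_of_eq (by ring)
    have h1 := hstep 0 (h / 4) le_rfl (by positivity)
    rw [zero_add] at h1
    have h2 : ∫ x in {x | h / 4 < trunc z x0 δ 0 x}, trunc z x0 δ 0 x ^ (2:ℝ) ≤
        ∫ x, trunc z x0 δ 0 x ^ (2:ℝ) :=
      setIntegral_le_integral (hw2i 0 le_rfl)
        (Eventually.of_forall fun x => Real.rpow_nonneg (trunc_nonneg x) _)
    have h3 := (hen 0 le_rfl).1
    set X := ∫ x, trunc z x0 δ 0 x ^ (2:ℝ)
    set Y4 := ∫ x, trunc z x0 δ (h / 4) x with hY4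
    set P := (8 * C * 4 ^ n) ^ n with hP
    have hP0 : 0 < P := by positivity
    have hKp : 0 < (h / δ) ^ p := by positivity
    have h4 : a * X ≤ C3 * (h / δ) ^ p * (2 * h * (δ ^ n * ω)) := by
      refine h3.trans ?_
      gcongr
    have h6 : 8 * Y4 / h ≤ δ ^ n / P := by
      rw [div_le_div_iff₀ hh hP0]
      have h5 : h / 4 * Y4 ≤ X := h1.trans h2
      have h5' : a * (h * Y4) ≤ 4 * (a * X) := by
        have := mul_le_mul_of_nonneg_left h5 ha.le
        linarith
      have h7 : (64 * C3 * ω * P) * (h / δ) ^ p * Y4 ≤ a * h * Y4 :=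
        mul_le_mul_of_nonneg_right hΛ (hY0 _)
      have h8 : (8 * C3 * ω * (h / δ) ^ p) * (8 * Y4 * P) ≤
          (8 * C3 * ω * (h / δ) ^ p) * (δ ^ n * h) := by linarith
      exact le_of_mul_le_mul_left h8 (by positivity)
    have h7 : (8 * Y4 / h) ^ (1 / (n:ℝ)) ≤ δ / (8 * C * 4 ^ n) := by
      have hYn : 0 ≤ Y4 := hY0 _
      refine (Real.rpow_le_rpow (by positivity) h6 (by positivity)).trans (le_of_eq ?_)
      rw [hP, ← div_pow, one_div, Real.pow_rpow_inv_natCast (by positivity) (by omega)]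
    calc 8 * (C * (h / δ)) / h * (8 * Y4 / h) ^ (1 / (n:ℝ))
        ≤ 8 * (C * (h / δ)) / h * (δ / (8 * C * 4 ^ n)) := by gcongr
      _ = 1 / 4 ^ n := by field_simp
      _ ≤ (1 / 4) ^ n := by rw [div_pow, one_pow]

section ginf
variable {g : ℝ → ℝ} {θ : ℝ}

lemma ginf_bdd (hθ : 1 < θ) (hgp : ∀ t : ℝ, 0 < t → 0 < g t) {t : ℝ} (ht : 0 < t) :
    BddBelow (g '' Set.Ioo (t / θ) (θ * t)) := by
  refine ⟨0, ?_⟩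
  rintro _ ⟨s, hs, rfl⟩
  have : 0 < t / θ := by positivity
  exact (hgp s (this.trans hs.1)).le

lemma ginf_nonempty (hθ : 1 < θ) {t : ℝ} (ht : 0 < t) :
    (g '' Set.Ioo (t / θ) (θ * t)).Nonempty := by
  refine ⟨g t, t, ⟨?_, ?_⟩, rfl⟩
  · exact div_lt_self ht hθ
  · nlinarith

lemma ginf_le (hθ : 1 < θ) (hgp : ∀ t : ℝ, 0 < t → 0 < g t) {t s : ℝ} (ht : 0 < t)
    (h1 : t / θ < s) (h2 : s < θ * t) : ginf g θ t ≤ g s :=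
  csInf_le (ginf_bdd hθ hgp ht) ⟨s, ⟨h1, h2⟩, rfl⟩

lemma ginf_lower (hθ : 1 < θ) (hg : ContinuousOn g (Set.Ici 0))
    (hgp : ∀ t : ℝ, 0 < t → 0 < g t) {a c : ℝ} (ha : 0 < a) (hac : a ≤ c) :
    ∃ m, 0 < m ∧ ∀ t ∈ Set.Icc a c, m ≤ ginf g θ t := by
  have hθ0 : 0 < θ := by linarith
  have h0 : 0 < a / θ := by positivity
  have hle : a / θ ≤ θ * c := by
    have : a / θ ≤ a := div_le_self ha.le hθ.le
    nlinarith
  obtain ⟨s, hs, hmin⟩ := (isCompact_Icc (a := a / θ) (b := θ * c)).exists_isMinOn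
    ⟨a / θ, left_mem_Icc.2 hle⟩ (hg.mono fun s hs => h0.le.trans hs.1)
  refine ⟨g s, hgp s (h0.trans_le hs.1), fun t ht => ?_⟩
  refine le_csInf (ginf_nonempty hθ (ha.trans_le ht.1)) ?_
  rintro _ ⟨r, hr, rfl⟩
  refine hmin ⟨?_, ?_⟩
  · exact le_trans (by gcongr; exact ht.1) hr.1.le
  · exact hr.2.le.trans (by gcongr; exact ht.2)

lemma ginf_pos (hθ : 1 < θ) (hg : ContinuousOn g (Set.Ici 0))
    (hgp : ∀ t : ℝ, 0 < t → 0 < g t) {t : ℝ} (ht : 0 < t) : 0 < ginf g θ t := by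
  obtain ⟨m, hm, h⟩ := ginf_lower hθ hg hgp ht le_rfl
  exact hm.trans_le (h t ⟨le_rfl, le_rfl⟩)

lemma ginf_meas (hθ : 1 < θ) (hgp : ∀ t : ℝ, 0 < t → 0 < g t) :
    Measurable ((Set.Ioi (0:ℝ)).indicator (ginf g θ)) := by
  have hθ0 : 0 < θ := by linarith
  refine measurable_of_Iio fun c => ?_
  have h1 : IsOpen {t : ℝ | 0 < t ∧ ginf g θ t < c} := by
    have : {t : ℝ | 0 < t ∧ ginf g θ t < c} =
        ⋃ s ∈ {s : ℝ | g s < c}, {t : ℝ | 0 < t ∧ t / θ < s ∧ s < θ * t} := by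
      ext t
      simp only [mem_setOf_eq, mem_iUnion, exists_prop]
      constructor
      · rintro ⟨ht, h⟩
        obtain ⟨_, ⟨s, hs, rfl⟩, h'⟩ :=
          (csInf_lt_iff (ginf_bdd hθ hgp ht) (ginf_nonempty hθ ht)).1 h
        exact ⟨s, h', ht, hs.1, hs.2⟩
      · rintro ⟨s, h', ht, h1, h2⟩
        exact ⟨ht, (ginf_le hθ hgp ht h1 h2).trans_lt h'⟩
    rw [this]
    refine isOpen_biUnion fun s _ => ?_
    exact (isOpen_lt continuous_const continuous_id).inter
      ((isOpen_lt (continuous_id.div_const _) continuous_const).inter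
        (isOpen_lt continuous_const (continuous_const.mul continuous_id)))
  have h2 : (Set.Ioi (0:ℝ)).indicator (ginf g θ) ⁻¹' Iio c =
      {t : ℝ | 0 < t ∧ ginf g θ t < c} ∪ {t : ℝ | t ≤ 0 ∧ 0 < c} := by
    ext t
    by_cases ht : 0 < t
    · simp [indicator_of_mem (show t ∈ Ioi (0:ℝ) from ht), ht, not_le.2 ht]
    · simp [indicator_of_notMem (show t ∉ Ioi (0:ℝ) from ht), ht, not_lt.1 ht]
  rw [h2]
  refine h1.measurableSet.union ?_
  by_cases hc : 0 < c
  · simp only [hc, and_true]; exact measurableSet_Iic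
  · simp only [hc, and_false]; simp

lemma ginf_aem (hθ : 1 < θ) (hgp : ∀ t : ℝ, 0 < t → 0 < g t) {ξ : ℝ} (hξ : 0 < ξ) :
    AEMeasurable (ginf g θ) (volume.restrict (Ioi ξ)) := by
  refine ⟨_, ginf_meas hθ hgp, ?_⟩
  filter_upwards [ae_restrict_mem measurableSet_Ioi] with t ht
  rw [indicator_of_mem (show t ∈ Ioi (0:ℝ) from hξ.trans ht)]

lemma integrable_aux {φ : ℝ → ℝ} (h0 : ∀ t, 0 < t → 0 ≤ φ t)
    (hm : ∀ ξ, 0 < ξ → AEMeasurable φ (volume.restrict (Ioi ξ)))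
    (hb : ∀ ξ, 0 < ξ → ξ ≤ 1 → ∃ C, ∀ t ∈ Icc ξ 1, φ t ≤ C)
    (hi : (∫⁻ t in Set.Ioi (1 : ℝ), ENNReal.ofReal (φ t)) < ⊤) {ξ : ℝ} (hξ : 0 < ξ) :
    IntegrableOn φ (Ioi ξ) := by
  have h1 : IntegrableOn φ (Ioi 1) := by
    refine ⟨(hm 1 one_pos).aestronglyMeasurable, ?_⟩
    rw [hasFiniteIntegral_iff_ofReal]
    · exact hi
    · filter_upwards [ae_restrict_mem measurableSet_Ioi] with t ht
      exact h0 t (zero_lt_one.trans ht)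
  rcases le_total 1 ξ with h | h
  · exact h1.mono_set (Ioi_subset_Ioi h)
  obtain ⟨C, hC⟩ := hb ξ hξ h
  have h2 : IntegrableOn φ (Ioc ξ 1) := by
    refine Integrable.of_bound (C := C) ?_ ?_
    · exact ((hm ξ hξ).mono_measure
        (Measure.restrict_mono Ioc_subset_Ioi_self le_rfl)).aestronglyMeasurable
    · filter_upwards [ae_restrict_mem measurableSet_Ioc] with t ht
      rw [Real.norm_of_nonneg (h0 t (hξ.trans ht.1))]
      exact hC t ⟨ht.1.le, ht.2⟩
  rw [← Ioc_union_Ioi_eq_Ioi h]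
  exact h2.union h1

/-- The first integrand. -/
def phi1 (g : ℝ → ℝ) (θ p t : ℝ) : ℝ := (ginf g θ t * t) ^ (-(1 / p))
/-- The second integrand. -/
def phi2 (g : ℝ → ℝ) (θ α t : ℝ) : ℝ := ginf g θ t ^ (-(1 / α))

lemma rpow_neg_anti {a c e : ℝ} (ha : 0 < a) (hac : a ≤ c) (he : 0 < e) :
    c ^ (-(1 / e)) ≤ a ^ (-(1 / e)) :=
  Real.rpow_le_rpow_of_nonpos ha hac (by have : 0 < 1 / e := by positivity
                                         linarith)

lemma phi1_int (hθ : 1 < θ) (hg : ContinuousOn g (Set.Ici 0))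
    (hgp : ∀ t : ℝ, 0 < t → 0 < g t) {p : ℝ} (hp : 0 < p)
    (hi : (∫⁻ t in Set.Ioi (1 : ℝ), ENNReal.ofReal ((ginf g θ t * t) ^ (-(1 / p)))) < ⊤)
    {ξ : ℝ} (hξ : 0 < ξ) : IntegrableOn (phi1 g θ p) (Ioi ξ) := by
  refine integrable_aux (fun t ht => ?_) (fun ξ hξ => ?_) (fun ξ hξ h => ?_) hi hξ
  · have := ginf_pos hθ hg hgp ht
    positivity
  · exact ((ginf_aem hθ hgp hξ).mul aemeasurable_id).pow_const _
  · obtain ⟨m, hm, h1⟩ := ginf_lower hθ hg hgp hξ h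
    refine ⟨(m * ξ) ^ (-(1 / p)), fun t ht => ?_⟩
    refine rpow_neg_anti (by positivity) ?_ hp
    exact mul_le_mul (h1 t ht) ht.1 hξ.le (hm.le.trans (h1 t ht))

lemma phi2_int (hθ : 1 < θ) (hg : ContinuousOn g (Set.Ici 0))
    (hgp : ∀ t : ℝ, 0 < t → 0 < g t) {p : ℝ} (hp : 0 < p)
    (hi : (∫⁻ t in Set.Ioi (1 : ℝ), ENNReal.ofReal (ginf g θ t ^ (-(1 / p)))) < ⊤)
    {ξ : ℝ} (hξ : 0 < ξ) : IntegrableOn (phi2 g θ p) (Ioi ξ) := by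
  refine integrable_aux (fun t ht => ?_) (fun ξ hξ => ?_) (fun ξ hξ h => ?_) hi hξ
  · have := ginf_pos hθ hg hgp ht
    positivity
  · exact (ginf_aem hθ hgp hξ).pow_const _
  · obtain ⟨m, hm, h1⟩ := ginf_lower hθ hg hgp hξ h
    exact ⟨m ^ (-(1 / p)), fun t ht => rpow_neg_anti (by positivity) (h1 t ht) hp⟩

end ginf

lemma Sol.mono {n : ℕ} {p C₁ C₂ α : ℝ} {A : Euc n → Euc n → Euc n} {b q : Euc n → ℝ}
    {g : ℝ → ℝ} {u : Euc n → ℝ} (S : Sol n p C₁ C₂ α A b q g u) {r s : ℝ} (hr : 0 < r)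
    (hrs : r ≤ s) : sphMax u r ≤ sphMax u s := by
  obtain ⟨x, hx, h⟩ := exists_sphMax S.hn S.hu.continuous hr.le
  rw [← h]
  exact S.maxp (hr.trans_le hrs) (by rw [hx]; exact hrs)

lemma single_alg {p α Λ C₁ Q B δ H G : ℝ} (hp : 1 < p) (hα : 0 < α) (hΛ : 0 < Λ) (hC₁ : 0 < C₁)
    (hQ : 0 < Q) (hB : 0 ≤ B) (hδ : 0 < δ) (hH : 0 < H) (hG : 0 < G)
    (h : Q * G * H < Λ * (H / δ) ^ p * (2 + 2 * B * H * (H / δ) ^ (α - p) / C₁)) :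
    δ ≤ ((4 * Λ) ^ (1 / p) + (4 * Λ / C₁) ^ (1 / α)) *
      (Q ^ (-(1 / p)) * (H ^ ((p - 1) / p) * G ^ (-(1 / p))) +
        (B / Q) ^ (1 / α) * (H * G ^ (-(1 / α)))) := by
  have hp0 : 0 < p := by linarith
  set K := H / δ with hK
  have hK0 : 0 < K := by positivity
  have hKa : K ^ p * K ^ (α - p) = K ^ α := by
    rw [← Real.rpow_add hK0]; congr 1; ring
  have h1 : Q * G * H < 2 * Λ * K ^ p + 2 * Λ / C₁ * B * H * K ^ α := by
    rw [← hKa]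
    refine h.trans_le (le_of_eq ?_)
    field_simp
  have n1 : 0 ≤ Q ^ (-(1 / p)) * (H ^ ((p - 1) / p) * G ^ (-(1 / p))) := by positivity
  have n2 : 0 ≤ (B / Q) ^ (1 / α) * (H * G ^ (-(1 / α))) := by positivity
  have c1 : 0 < (4 * Λ) ^ (1 / p) := by positivity
  have c2 : 0 < (4 * Λ / C₁) ^ (1 / α) := by positivity
  rcases le_total (2 * Λ / C₁ * B * H * K ^ α) (2 * Λ * K ^ p) with hc | hc
  · have h2 : Q * G * H ≤ 4 * Λ * K ^ p := by linarith
    have h3 : δ ^ p ≤ 4 * Λ * (Q⁻¹ * (H ^ (p - 1) * G⁻¹)) := by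
      rw [hK, Real.div_rpow hH.le hδ.le] at h2
      have hHp : H ^ p = H ^ (p - 1) * H := by
        have := Real.rpow_add_one' hH.le (y := p - 1) (by linarith)
        simpa using this
      rw [hHp] at h2
      have hδp : 0 < δ ^ p := by positivity
      have h4 : Q * G * δ ^ p ≤ 4 * Λ * H ^ (p - 1) := by
        rw [mul_div_assoc', le_div_iff₀ hδp] at h2
        have : H * (Q * G * δ ^ p) ≤ H * (4 * Λ * H ^ (p - 1)) := by linarith
        exact le_of_mul_le_mul_left this hH
      have : δ ^ p = (Q * G)⁻¹ * (Q * G * δ ^ p) := by field_simp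
      rw [this]
      calc (Q * G)⁻¹ * (Q * G * δ ^ p) ≤ (Q * G)⁻¹ * (4 * Λ * H ^ (p - 1)) := by gcongr
        _ = _ := by rw [mul_inv]; ring
    have h4 : δ ≤ (4 * Λ) ^ (1 / p) * (Q ^ (-(1 / p)) * (H ^ ((p - 1) / p) * G ^ (-(1 / p)))) := by
      have h5 := Real.rpow_le_rpow (by positivity) h3 (show 0 ≤ 1 / p by positivity)
      rw [← Real.rpow_mul hδ.le, mul_one_div_cancel hp0.ne', Real.rpow_one,
        Real.mul_rpow (x := 4 * Λ) (by positivity) (by positivity),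
        Real.mul_rpow (x := Q⁻¹) (by positivity) (by positivity),
        Real.mul_rpow (x := H ^ (p - 1)) (by positivity) (by positivity), ← Real.rpow_mul hH.le,
        Real.inv_rpow hQ.le, Real.inv_rpow hG.le, ← Real.rpow_neg hQ.le, ← Real.rpow_neg hG.le,
        mul_one_div] at h5
      exact h5
    nlinarith [mul_nonneg c1.le n2, mul_nonneg c2.le n1, mul_nonneg c2.le n2]
  · have h2 : Q * G * H ≤ 4 * Λ / C₁ * B * H * K ^ α := by
      have : 4 * Λ / C₁ * B * H * K ^ α = 2 * (2 * Λ / C₁ * B * H * K ^ α) := by ring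
      linarith
    have h3 : δ ^ α ≤ 4 * Λ / C₁ * ((B / Q) * (H ^ α * G⁻¹)) := by
      rw [hK, Real.div_rpow hH.le hδ.le] at h2
      have hδp : 0 < δ ^ α := by positivity
      have h4 : Q * G * δ ^ α ≤ 4 * Λ / C₁ * B * H ^ α := by
        rw [mul_div_assoc', le_div_iff₀ hδp] at h2
        have : H * (Q * G * δ ^ α) ≤ H * (4 * Λ / C₁ * B * H ^ α) := by linarith
        exact le_of_mul_le_mul_left this hH
      have : δ ^ α = (Q * G)⁻¹ * (Q * G * δ ^ α) := by field_simp
      rw [this]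
      calc (Q * G)⁻¹ * (Q * G * δ ^ α) ≤ (Q * G)⁻¹ * (4 * Λ / C₁ * B * H ^ α) := by gcongr
        _ = _ := by rw [mul_inv]; ring
    have h4 : δ ≤ (4 * Λ / C₁) ^ (1 / α) * ((B / Q) ^ (1 / α) * (H * G ^ (-(1 / α)))) := by
      have h5 := Real.rpow_le_rpow (by positivity) h3 (show 0 ≤ 1 / α by positivity)
      rw [← Real.rpow_mul hδ.le, mul_one_div_cancel hα.ne', Real.rpow_one,
        Real.mul_rpow (by positivity) (by positivity), Real.mul_rpow (by positivity) (by positivity),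
        Real.mul_rpow (by positivity) (by positivity), ← Real.rpow_mul hH.le,
        Real.inv_rpow hG.le, ← Real.rpow_neg hG.le,
        mul_one_div_cancel hα.ne', Real.rpow_one] at h5
      exact h5
    nlinarith [mul_nonneg c1.le n2, mul_nonneg c2.le n1, mul_nonneg c1.le n1]

lemma single_step (n : ℕ) (hn : 2 ≤ n) (p C₁ C₂ α : ℝ) (hp : 1 < p) (hC₁ : 0 < C₁) (hC₂ : 0 < C₂)
    (hα₁ : p - 1 ≤ α) :
    ∃ c : ℝ, 0 < c ∧ ∀ (A : Euc n → Euc n → Euc n) (b q : Euc n → ℝ)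
    (g : ℝ → ℝ) (u : Euc n → ℝ), Sol n p C₁ C₂ α A b q g u →
    ∀ lo hi Q B : ℝ, 0 < Q → 0 ≤ B →
    (∀ᵐ x : Euc n, lo < ‖x‖ → ‖x‖ < hi → b x ≤ B ∧ Q ≤ q x) →
    ∀ r s H G : ℝ, 0 < r → r < s → lo ≤ r - (s - r) → s ≤ hi → 0 < H → H < sphMax u r →
    sphMax u s - sphMax u r ≤ H → 0 < G →
    (∀ t ∈ Icc (sphMax u r - H) (sphMax u s), G ≤ g t) →
    s - r ≤ c * (Q ^ (-(1 / p)) * (H ^ ((p - 1) / p) * G ^ (-(1 / p))) +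
        (B / Q) ^ (1 / α) * (H * G ^ (-(1 / α)))) := by
  obtain ⟨Λ, hΛ, hkl⟩ := key_lemma n hn p C₁ C₂ hC₁ hC₂
  have hα : 0 < α := by linarith
  refine ⟨(4 * Λ) ^ (1 / p) + (4 * Λ / C₁) ^ (1 / α), by positivity, ?_⟩
  intro A b q g u S lo hi Q B hQ hB hae r s H G hr hrs hlo hhi hH hHM hMM hG hGg
  have hδ : 0 < s - r := by linarith
  have huc := S.hu.continuous
  refine single_alg hp hα hΛ hC₁ hQ hB hδ hH hG ?_
  set δ := s - r with hδd
  set t := 2 * B * H * (H / δ) ^ (α - p) / C₁ with ht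
  have ht0 : 0 ≤ t := by positivity
  set N : ℕ := ⌈t⌉₊ + 1 with hN
  have hN0 : (0:ℝ) < N := by positivity
  have hN1 : (1:ℝ) ≤ N := by rw [hN]; push_cast; linarith [Nat.cast_nonneg (α := ℝ) ⌈t⌉₊]
  have hNt : t ≤ N := by rw [hN]; push_cast; linarith [Nat.le_ceil t]
  have hNu : (N:ℝ) ≤ 2 + t := by
    rw [hN]; push_cast; linarith [Nat.ceil_lt_add_one ht0]
  by_contra hcon
  push Not at hcon
  have hKp : 0 < (H / δ) ^ p := by positivity
  have hcon' : Λ * (H / δ) ^ p * N ≤ Q * G * H :=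
    (mul_le_mul_of_nonneg_left hNu (by positivity)).trans hcon
  have hKK : H / N / (δ / N) = H / δ := by field_simp
  have hδN : 0 < δ / N := by positivity
  have hδN1 : δ / N ≤ δ := div_le_self hδ.le hN1
  have hHN1 : H / N ≤ H := div_le_self hH.le hN1
  have step : ∀ i : ℕ, i < N → sphMax u (r + i * (δ / N)) + H / N <
      sphMax u (r + (i + 1 : ℕ) * (δ / N)) := by
    intro i hi'
    have hi1 : ((i + 1 : ℕ) : ℝ) ≤ N := by exact_mod_cast hi'
    have hiδ : ((i + 1 : ℕ) : ℝ) * (δ / N) ≤ δ := by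
      calc ((i + 1 : ℕ) : ℝ) * (δ / N) ≤ N * (δ / N) := by gcongr
        _ = δ := by field_simp
    push_cast at hiδ ⊢
    have hi0 : (0:ℝ) ≤ i * (δ / N) := by positivity
    have hri : 0 < r + i * (δ / N) := by linarith
    obtain ⟨x0, hx0, hux0⟩ := exists_sphMax hn huc hri.le
    have hmono := S.mono hr (show r ≤ r + i * (δ / N) by linarith)
    obtain ⟨x, hx, hlt⟩ := hkl α A b q g u S x0 (δ / N) (H / N) (Q * G) B hδN (by positivity)
      (by positivity) hB (by
        filter_upwards [hae] with x hx hxb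
        have hd : ‖x - x0‖ < δ / N := by rw [← dist_eq_norm]; exact hxb
        have hu1 : ‖x‖ ≤ ‖x0‖ + ‖x - x0‖ := by
          have := norm_add_le x0 (x - x0); simpa using this
        have hu2 : ‖x0‖ - ‖x - x0‖ ≤ ‖x‖ := by
          have := norm_sub_norm_le x0 x; rw [norm_sub_rev] at this; linarith
        have hxs : ‖x‖ < s := by rw [hx0] at hu1; linarith
        obtain ⟨hb1, hq1⟩ := hx (by rw [hx0] at hu2; linarith) (by linarith)
        refine ⟨hb1, fun h1 => ?_⟩
        have hg1 : G ≤ g (u x) := by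
          refine hGg _ ⟨?_, S.maxp (by linarith) hxs.le⟩
          rw [hux0] at h1
          linarith
        exact mul_le_mul hq1 hg1 hG.le (hQ.le.trans hq1)) (by
        rw [hKK]
        have h1 : 2 * B * H * (H / δ) ^ (α - p) ≤ N * C₁ := by
          rw [ht, div_le_iff₀ hC₁] at hNt; exact hNt
        have h2 : B * (H / N) * (H / δ) ^ (α - p) = (2 * B * H * (H / δ) ^ (α - p)) / N / 2 := by
          field_simp
        rw [h2]
        have : 2 * B * H * (H / δ) ^ (α - p) / N ≤ C₁ := by
          rw [div_le_iff₀ hN0]; linarith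
        linarith) (by
        rw [hKK, mul_div_assoc', le_div_iff₀ hN0]; exact hcon')
    rw [hux0] at hlt
    refine hlt.trans_le (S.maxp (by linarith) ?_)
    have hd : ‖x - x0‖ ≤ δ / N := by rw [← dist_eq_norm]; exact hx
    have hu1 : ‖x‖ ≤ ‖x0‖ + ‖x - x0‖ := by
      have := norm_add_le x0 (x - x0); simpa using this
    rw [hx0] at hu1
    linarith
  have hall : ∀ i : ℕ, i ≤ N → 0 < i → sphMax u r + i * (H / N) < sphMax u (r + i * (δ / N)) := by
    intro i
    induction i with
    | zero => intro _ h; exact absurd h (lt_irrefl _)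
    | succ i ih =>
      intro hi1 _
      have h1 := step i (by omega)
      rcases Nat.eq_zero_or_pos i with h0 | h0
      · subst h0; simpa using h1
      · have h2 := ih (by omega) h0
        push_cast at h1 ⊢
        linarith
  have hfin := hall N le_rfl (by omega)
  have e1 : (N:ℝ) * (H / N) = H := by field_simp
  have e2 : (N:ℝ) * (δ / N) = δ := by field_simp
  rw [e1, e2, hδd, add_sub_cancel] at hfin
  linarith

open scoped Topology

lemma tail_split {φ : ℝ → ℝ} {a c : ℝ} (hac : a ≤ c) (hi : IntegrableOn φ (Ioi a)) :
    ∫ t in Ioi a, φ t = (∫ t in Ioc a c, φ t) + ∫ t in Ioi c, φ t := by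
  rw [← setIntegral_union Ioc_disjoint_Ioi_same measurableSet_Ioi
    (hi.mono_set Ioc_subset_Ioi_self) (hi.mono_set (Ioi_subset_Ioi hac)),
    Ioc_union_Ioi_eq_Ioi hac]

lemma tail_lower {φ : ℝ → ℝ} {a c m : ℝ} (hac : a ≤ c) (hi : IntegrableOn φ (Ioi a))
    (hm : ∀ t ∈ Ioc a c, m ≤ φ t) :
    (c - a) * m ≤ (∫ t in Ioi a, φ t) - ∫ t in Ioi c, φ t := by
  rw [tail_split hac hi, add_sub_cancel_right]
  have h1 := setIntegral_ge_of_const_le_real measurableSet_Ioc measure_Ioc_lt_top.ne hm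
    (hi.mono_set Ioc_subset_Ioi_self)
  rw [Real.volume_real_Ioc_of_le hac] at h1
  linarith

lemma pow_diff {p x0 x1 : ℝ} (hp : 1 < p) (h1 : 0 ≤ x1) (h : x1 ≤ x0) :
    x1 ^ (1 / (p - 1)) * (x0 - x1) ≤ x0 ^ (p / (p - 1)) - x1 ^ (p / (p - 1)) := by
  have hp1 : 0 < p - 1 := by linarith
  have e : p / (p - 1) = 1 / (p - 1) + 1 := by field_simp; ring
  have e1 : ∀ t : ℝ, 0 ≤ t → t ^ (p / (p - 1)) = t ^ (1 / (p - 1)) * t := fun t ht => by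
    rw [e, Real.rpow_add_one' ht (by positivity)]
  rw [e1 _ h1, e1 _ (h1.trans h)]
  have := Real.rpow_le_rpow h1 h (show 0 ≤ 1 / (p - 1) by positivity)
  have := mul_le_mul_of_nonneg_right this (h1.trans h)
  linarith

section
variable {g : ℝ → ℝ} {θ p α : ℝ}

lemma phi1_lower (hθ : 1 < θ) (hg : ContinuousOn g (Set.Ici 0))
    (hgp : ∀ t : ℝ, 0 < t → 0 < g t) (hp : 1 < p) {t G T : ℝ} (ht : 0 < t)
    (h1 : ginf g θ t ≤ G) (h2 : t ≤ T) : (G * T) ^ (-(1 / p)) ≤ phi1 g θ p t := by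
  have h := ginf_pos hθ hg hgp ht
  refine rpow_neg_anti (by positivity) ?_ (by linarith)
  exact mul_le_mul h1 h2 ht.le (h.le.trans h1)

lemma phi2_lower (hθ : 1 < θ) (hg : ContinuousOn g (Set.Ici 0))
    (hgp : ∀ t : ℝ, 0 < t → 0 < g t) (hα : 0 < α) {t G : ℝ} (ht : 0 < t)
    (h1 : ginf g θ t ≤ G) : G ^ (-(1 / α)) ≤ phi2 g θ α t :=
  rpow_neg_anti (ginf_pos hθ hg hgp ht) h1 hα

lemma min_on (hg : ContinuousOn g (Set.Ici 0))
    (hgp : ∀ t : ℝ, 0 < t → 0 < g t) {a c : ℝ} (ha : 0 < a) (hac : a ≤ c) :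
    ∃ s ∈ Icc a c, 0 < g s ∧ ∀ t ∈ Icc a c, g s ≤ g t := by
  obtain ⟨s, hs, hmin⟩ := (isCompact_Icc (a := a) (b := c)).exists_isMinOn
    ⟨a, left_mem_Icc.2 hac⟩ (hg.mono fun s hs => ha.le.trans hs.1)
  exact ⟨s, hs, hgp s (ha.trans_le hs.1), fun t ht => hmin ht⟩

lemma fast_base (hθ : 1 < θ) (hg : ContinuousOn g (Set.Ici 0))
    (hgp : ∀ t : ℝ, 0 < t → 0 < g t) (hp : 1 < p) (hα : 0 < α)
    (hi1 : ∀ ξ, 0 < ξ → IntegrableOn (phi1 g θ p) (Ioi ξ))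
    (hi2 : ∀ ξ, 0 < ξ → IntegrableOn (phi2 g θ α) (Ioi ξ)) {l : ℝ} (hl : 1 < l)
    (hl2 : l ^ 2 * (θ + 1) < 2 * θ) {s0 s1 : ℝ} (hs0 : 0 < s0) (h1 : l * s0 ≤ s1)
    (h2 : s1 < l ^ 2 * s0) :
    ∃ G, 0 < G ∧ (∀ t ∈ Icc (s0 - (s1 - s0)) s1, G ≤ g t) ∧ 0 < s1 - s0 ∧ s1 - s0 < s0 ∧
      (s1 - s0) ^ ((p - 1) / p) * G ^ (-(1 / p)) ≤ l / (l - 1) *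
        ((∫ t in Ioi s0, phi1 g θ p t) - ∫ t in Ioi s1, phi1 g θ p t) ∧
      (s1 - s0) * G ^ (-(1 / α)) ≤
        ((∫ t in Ioi s0, phi2 g θ α t) - ∫ t in Ioi s1, phi2 g θ α t) := by
  have hp0 : 0 < p := by linarith
  have hθ0 : 0 < θ := by linarith
  have hr : s1 * (θ + 1) < 2 * θ * s0 := by
    calc s1 * (θ + 1) < l ^ 2 * s0 * (θ + 1) := by gcongr
      _ = l ^ 2 * (θ + 1) * s0 := by ring
      _ < 2 * θ * s0 := by gcongr
  have h3 : s0 < s1 := by nlinarith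
  have h4 : s1 < 2 * s0 := by nlinarith
  have hH : 0 < s1 - s0 := by linarith
  obtain ⟨st, hst, hG, hmin⟩ := min_on hg hgp (show 0 < s0 - (s1 - s0) by linarith)
    (show s0 - (s1 - s0) ≤ s1 by linarith)
  have hgi : ∀ t ∈ Ioc s0 s1, ginf g θ t ≤ g st := by
    intro t ht
    refine ginf_le hθ hgp (hs0.trans ht.1) ?_ ?_
    · rw [div_lt_iff₀ hθ0]
      nlinarith [ht.2, hst.1]
    · nlinarith [ht.1, hst.2]
  refine ⟨g st, hG, hmin, hH, by linarith, ?_, ?_⟩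
  · have k1 := tail_lower h3.le (hi1 s0 hs0) (m := (g st * s1) ^ (-(1 / p))) (fun t ht =>
      phi1_lower hθ hg hgp hp (hs0.trans ht.1) (hgi t ht) ht.2)
    set G := g st
    set H := s1 - s0 with hHd
    set c2 := l / (l - 1) with hc2
    have hl1 : 0 < l - 1 := by linarith
    have hc20 : 1 ≤ c2 := by rw [hc2, le_div_iff₀ hl1]; linarith
    have hs1 : s1 ≤ c2 * H := by
      rw [hc2, div_mul_eq_mul_div, le_div_iff₀ hl1]; nlinarith
    have k2 : (G * (c2 * H)) ^ (-(1 / p)) ≤ (G * s1) ^ (-(1 / p)) := by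
      refine rpow_neg_anti ?_ ?_ hp0
      · have : 0 < s1 := by linarith
        positivity
      · gcongr
    have k3 : H ^ ((p - 1) / p) * G ^ (-(1 / p)) ≤ c2 * (H * (G * (c2 * H)) ^ (-(1 / p))) := by
      rw [Real.mul_rpow hG.le (by positivity), Real.mul_rpow (by positivity) hH.le]
      have e1 : H ^ ((p - 1) / p) = H * H ^ (-(1 / p)) := by
        rw [show (p - 1) / p = 1 + (-(1 / p)) by field_simp; ring, Real.rpow_add hH, Real.rpow_one]
      have e2 : 1 ≤ c2 * c2 ^ (-(1 / p)) := by
        have : c2 * c2 ^ (-(1 / p)) = c2 ^ (1 - 1 / p) := by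
          rw [show 1 - 1 / p = 1 + (-(1 / p)) by ring, Real.rpow_add (by linarith), Real.rpow_one]
        rw [this]
        refine Real.one_le_rpow hc20 ?_
        have : 1 / p < 1 := by rw [div_lt_one hp0]; exact hp
        linarith
      rw [e1]
      have hX : 0 ≤ H * H ^ (-(1 / p)) * G ^ (-(1 / p)) := by positivity
      calc H * H ^ (-(1 / p)) * G ^ (-(1 / p)) ≤
          (c2 * c2 ^ (-(1 / p))) * (H * H ^ (-(1 / p)) * G ^ (-(1 / p))) :=
            le_mul_of_one_le_left hX e2
        _ = _ := by ring
    refine k3.trans ?_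
    gcongr
    exact (mul_le_mul_of_nonneg_left k2 hH.le).trans k1
  · exact tail_lower h3.le (hi2 s0 hs0) (m := (g st) ^ (-(1 / α))) (fun t ht =>
      phi2_lower hθ hg hgp hα (hs0.trans ht.1) (hgi t ht))

set_option maxHeartbeats 1600000 in
lemma annulus (hθ : 1 < θ) (hp : 1 < p) (hα : 0 < α) :
    ∃ C : ℝ, 0 < C ∧ ∀ g : ℝ → ℝ, ContinuousOn g (Set.Ici 0) → (∀ t : ℝ, 0 < t → 0 < g t) →
    (∀ ξ, 0 < ξ → IntegrableOn (phi1 g θ p) (Ioi ξ)) →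
    (∀ ξ, 0 < ξ → IntegrableOn (phi2 g θ α) (Ioi ξ)) →
    ∀ (M : ℝ → ℝ) (ρ ρ1 : ℝ), ρ < ρ1 → MonotoneOn M (Icc ρ ρ1) → ContinuousOn M (Icc ρ ρ1) →
    0 < M ρ → ∀ c P R : ℝ, 0 ≤ c → 0 ≤ P → 0 ≤ R →
    (∀ r s H G : ℝ, ρ ≤ r → r < s → s ≤ ρ1 → 0 < H → H < M r → M s - M r ≤ H → 0 < G →
      (∀ t ∈ Icc (M r - H) (M s), G ≤ g t) →
      s - r ≤ c * (P * (H ^ ((p - 1) / p) * G ^ (-(1 / p))) + R * (H * G ^ (-(1 / α))))) →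
    ∃ X Y : ℝ, 0 ≤ X ∧ 0 ≤ Y ∧ ρ1 - ρ ≤ c * C * (P * X + R * Y) ∧
      X ^ (p / (p - 1)) + Y ≤ C * (Fzero g θ p α (M ρ) - Fzero g θ p α (M ρ1)) := by
  have hp0 : 0 < p := by linarith
  have hp1 : 0 < p - 1 := by linarith
  have hθ0 : 0 < θ := by linarith
  obtain ⟨l, hl, hl2⟩ : ∃ l : ℝ, 1 < l ∧ l ^ 2 * (θ + 1) < 2 * θ := by
    refine ⟨1 + (θ - 1) / (4 * (θ + 1)), ?_, ?_⟩
    · have : 0 < (θ - 1) / (4 * (θ + 1)) := div_pos (by linarith) (by linarith)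
      linarith
    · set e := (θ - 1) / (4 * (θ + 1)) with he
      have he0 : 0 < e := div_pos (by linarith) (by linarith)
      have he1 : e < 1 := by rw [he, div_lt_one (by linarith)]; linarith
      have he2 : e * (θ + 1) = (θ - 1) / 4 := by rw [he]; field_simp
      nlinarith
  have hl1 : 0 < l - 1 := by linarith
  have hll : l < l ^ 2 := by nlinarith
  have hl22 : l ^ 2 < 2 := by nlinarith
  set c2 := l / (l - 1) with hc2
  have hc20 : 1 ≤ c2 := by rw [hc2, le_div_iff₀ hl1]; linarith
  set k := ((l ^ 2 - l) / l ^ 2) ^ (1 / (p - 1)) with hk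
  have hk0 : 0 < k := by
    have : 0 < (l ^ 2 - l) / l ^ 2 := div_pos (by linarith) (by positivity)
    positivity
  have hki : 0 < 1 / k := by positivity
  refine ⟨c2 + 1 + 1 / k, by positivity, ?_⟩
  intro g hg hgp hi1 hi2 M ρ ρ1 hρ hMm hMc hM0 c P R hc hP hR hss
  have hρm : ρ ∈ Icc ρ ρ1 := ⟨le_rfl, hρ.le⟩
  have hρ1m : ρ1 ∈ Icc ρ ρ1 := ⟨hρ.le, le_rfl⟩
  have ht01 : M ρ ≤ M ρ1 := hMm hρm hρ1m hρ.le
  let T1 : ℝ → ℝ := fun ξ => ∫ t in Ioi ξ, phi1 g θ p t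
  let T2 : ℝ → ℝ := fun ξ => ∫ t in Ioi ξ, phi2 g θ α t
  have hφ1 : ∀ t, 0 < t → 0 ≤ phi1 g θ p t := fun t ht => by
    have := ginf_pos hθ hg hgp ht
    unfold phi1; positivity
  have hφ2 : ∀ t, 0 < t → 0 ≤ phi2 g θ α t := fun t ht => by
    have := ginf_pos hθ hg hgp ht
    unfold phi2; positivity
  have hT1n : ∀ a, 0 < a → 0 ≤ T1 a := fun a ha =>
    setIntegral_nonneg measurableSet_Ioi fun t ht => hφ1 t (ha.trans ht)
  have hT2n : ∀ a, 0 < a → 0 ≤ T2 a := fun a ha =>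
    setIntegral_nonneg measurableSet_Ioi fun t ht => hφ2 t (ha.trans ht)
  have hT1m : ∀ a d, 0 < a → a ≤ d → T1 d ≤ T1 a := fun a d ha had => by
    have := tail_lower had (hi1 a ha) (m := 0) fun t ht => hφ1 t (ha.trans ht.1)
    simp only [T1]; linarith
  have hT2m : ∀ a d, 0 < a → a ≤ d → T2 d ≤ T2 a := fun a d ha had => by
    have := tail_lower had (hi2 a ha) (m := 0) fun t ht => hφ2 t (ha.trans ht.1)
    simp only [T2]; linarith
  have hF : ∀ ξ, Fzero g θ p α ξ = T1 ξ ^ (p / (p - 1)) + T2 ξ := fun ξ => rfl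
  rw [hF, hF]
  have hM10 : 0 < M ρ1 := hM0.trans_le ht01
  have hpp : 0 ≤ p / (p - 1) := by positivity
  have dT2 := hT2m _ _ hM0 ht01
  have dT1 := hT1m _ _ hM0 ht01
  have dT1p : T1 (M ρ1) ^ (p / (p - 1)) ≤ T1 (M ρ) ^ (p / (p - 1)) :=
    Real.rpow_le_rpow (hT1n _ hM10) dT1 hpp
  rcases le_or_gt (l * M ρ) (M ρ1) with hfast | hslow
  · -- fast growth
    have hbase : ∀ r s, ρ ≤ r → r < s → s ≤ ρ1 → l * M r ≤ M s → M s < l ^ 2 * M r →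
        s - r ≤ c * c2 * (P * (T1 (M r) - T1 (M s)) + R * (T2 (M r) - T2 (M s))) := by
      intro r s hr hrs hs h1 h2
      have hMr : 0 < M r := hM0.trans_le (hMm hρm ⟨hr, (hrs.le).trans hs⟩ hr)
      obtain ⟨G, hG, hGg, hH, hH2, e1, e2⟩ := fast_base hθ hg hgp hp hα hi1 hi2 hl hl2 hMr h1 h2
      have h3 := hss r s (M s - M r) G hr hrs hs hH hH2 le_rfl hG hGg
      refine h3.trans ?_
      have e2' : (M s - M r) * G ^ (-(1 / α)) ≤ c2 * (T2 (M r) - T2 (M s)) := by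
        have hnn : 0 ≤ (M s - M r) * G ^ (-(1 / α)) := by positivity
        exact e2.trans (le_mul_of_one_le_left (hnn.trans e2) hc20)
      calc c * (P * ((M s - M r) ^ ((p - 1) / p) * G ^ (-(1 / p))) +
            R * ((M s - M r) * G ^ (-(1 / α))))
          ≤ c * (P * (c2 * (T1 (M r) - T1 (M s))) + R * (c2 * (T2 (M r) - T2 (M s)))) := by
            gcongr
        _ = _ := by ring
    have hind : ∀ (j : ℕ) r s, ρ ≤ r → r < s → s ≤ ρ1 → l * M r ≤ M s → M s < l ^ (j + 2) * M r →
        s - r ≤ c * c2 * (P * (T1 (M r) - T1 (M s)) + R * (T2 (M r) - T2 (M s))) := by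
      intro j
      induction j with
      | zero => intro r s hr hrs hs h1 h2; exact hbase r s hr hrs hs h1 (by simpa using h2)
      | succ j ih =>
        intro r s hr hrs hs h1 h2
        rcases lt_or_ge (M s) (l ^ 2 * M r) with h3 | h3
        · exact hbase r s hr hrs hs h1 h3
        have hMr : 0 < M r := hM0.trans_le (hMm hρm ⟨hr, (hrs.le).trans hs⟩ hr)
        obtain ⟨y, hy, hMy⟩ := intermediate_value_Icc hrs.le
          (hMc.mono (Icc_subset_Icc hr hs)) (show l * M r ∈ Icc (M r) (M s) from ⟨by nlinarith, h1⟩)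
        have hry : r < y := lt_of_le_of_ne hy.1 (by rintro rfl; nlinarith)
        have hys : y < s := lt_of_le_of_ne hy.2 (by rintro rfl; nlinarith)
        have a1 := hbase r y hr hry (hys.le.trans hs) hMy.ge (by rw [hMy]; nlinarith)
        have a2 := ih y s (hr.trans hry.le) hys hs (by rw [hMy]; nlinarith) (by
          rw [hMy]; refine h2.trans_le (le_of_eq ?_); ring)
        linear_combination a1 + a2
    obtain ⟨j, hj⟩ := pow_unbounded_of_one_lt (M ρ1 / M ρ) hl
    have hfin := hind j ρ ρ1 le_rfl hρ le_rfl hfast (by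
      rw [div_lt_iff₀ hM0] at hj
      refine hj.trans_le ?_
      gcongr
      · exact hl.le
      · omega)
    have hX0 : 0 ≤ T1 (M ρ) - T1 (M ρ1) := by linarith
    have hY0 : 0 ≤ T2 (M ρ) - T2 (M ρ1) := by linarith
    refine ⟨T1 (M ρ) - T1 (M ρ1), T2 (M ρ) - T2 (M ρ1), hX0, hY0, ?_, ?_⟩
    · refine hfin.trans ?_
      gcongr
      linarith
    · have h1 : (T1 (M ρ) - T1 (M ρ1)) ^ (p / (p - 1)) + T1 (M ρ1) ^ (p / (p - 1)) ≤
          (T1 (M ρ)) ^ (p / (p - 1)) := by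
        have := Real.add_rpow_le_rpow_add hX0 (hT1n _ hM10) (p := p / (p - 1))
          (by rw [le_div_iff₀ hp1]; linarith)
        simpa using this
      have h2 : (T1 (M ρ) - T1 (M ρ1)) ^ (p / (p - 1)) + (T2 (M ρ) - T2 (M ρ1)) ≤
        T1 (M ρ) ^ (p / (p - 1)) + T2 (M ρ) - (T1 (M ρ1) ^ (p / (p - 1)) + T2 (M ρ1)) := by linarith
      refine h2.trans (le_mul_of_one_le_left (by linarith) (by linarith))
  · -- slow growth
    set t0 := M ρ with ht0
    set t1 := M ρ1 with ht1
    obtain ⟨st, hst, hG, hmin⟩ := min_on hg hgp (show 0 < (2 - l) * t0 by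
      apply mul_pos _ hM0; nlinarith) (show (2 - l) * t0 ≤ l * t0 by nlinarith)
    set G := g st with hGd
    set H0 := t1 - t0 with hH0
    have hH00 : 0 ≤ H0 := by linarith
    have hgi : ∀ t ∈ Icc t0 (l ^ 2 * t0), ginf g θ t ≤ G := by
      intro t ht
      refine ginf_le hθ hgp (hM0.trans_le ht.1) ?_ ?_
      · rw [div_lt_iff₀ hθ0]
        refine lt_of_le_of_lt ht.2 (lt_of_lt_of_le ?_ (mul_le_mul_of_nonneg_right hst.1 hθ0.le))
        have h3 : l ^ 2 < (2 - l) * θ := by nlinarith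
        nlinarith
      · have h3 : l < θ := by nlinarith
        nlinarith [hst.2, ht.1]
    have hlim : ρ1 - ρ ≤ c * (P * (H0 ^ ((p - 1) / p) * G ^ (-(1 / p))) +
        R * (H0 * G ^ (-(1 / α)))) := by
      have hcont : ContinuousAt (fun H : ℝ => c * (P * (H ^ ((p - 1) / p) * G ^ (-(1 / p))) +
        R * (H * G ^ (-(1 / α))))) H0 := by
        have h1 : ContinuousAt (fun H : ℝ => H ^ ((p - 1) / p)) H0 :=
          Real.continuousAt_rpow_const _ _ (Or.inr (by positivity))
        exact continuousAt_const.mul ((continuousAt_const.mul (h1.mul continuousAt_const)).add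
          (continuousAt_const.mul (continuousAt_id.mul continuousAt_const)))
      refine ge_of_tendsto (hcont.tendsto.mono_left (nhdsWithin_le_nhds (s := Ioi H0))) ?_
      filter_upwards [Ioo_mem_nhdsGT (show H0 < (l - 1) * t0 by linarith)] with H hH
      refine hss ρ ρ1 H G le_rfl hρ le_rfl (by linarith [hH.1]) ?_ hH.1.le hG ?_
      · have := hH.2
        nlinarith
      · intro t ht
        exact hmin t ⟨by linarith [ht.1, hH.2], ht.2.trans hslow.le⟩
    refine ⟨H0 ^ ((p - 1) / p) * G ^ (-(1 / p)), H0 * G ^ (-(1 / α)), by positivity, by positivity,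
      ?_, ?_⟩
    · refine hlim.trans ?_
      gcongr
      exact le_mul_of_one_le_right hc (by linarith)
    · have hY : H0 * G ^ (-(1 / α)) ≤ T2 t0 - T2 t1 :=
        tail_lower ht01 (hi2 t0 hM0) fun t ht =>
          phi2_lower hθ hg hgp hα (hM0.trans ht.1) (hgi t ⟨ht.1.le, by nlinarith [ht.2]⟩)
      set a := (G * (l ^ 2 * t0)) ^ (-(1 / p)) with ha
      have ha0 : 0 < a := by positivity
      have hφa : ∀ t ∈ Icc t0 (l ^ 2 * t0), a ≤ phi1 g θ p t := fun t ht =>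
        phi1_lower hθ hg hgp hp (hM0.trans_le ht.1) (hgi t ht) ht.2
      have hX1 : H0 * a ≤ T1 t0 - T1 t1 :=
        tail_lower ht01 (hi1 t0 hM0) fun t ht => hφa t ⟨ht.1.le, by nlinarith [ht.2]⟩
      have hlt0 : 0 < l * t0 := by positivity
      have hX2 : (l ^ 2 * t0 - l * t0) * a ≤ T1 (l * t0) - T1 (l ^ 2 * t0) :=
        tail_lower (by nlinarith) (hi1 (l * t0) hlt0) fun t ht =>
          hφa t ⟨by nlinarith [ht.1], ht.2⟩
      have hX3 : (l ^ 2 - l) * t0 * a ≤ T1 t1 := by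
        have h1 := hT1m t1 (l * t0) hM10 hslow.le
        have h2 := hT1n (l ^ 2 * t0) (by positivity)
        linarith
      have hd := pow_diff hp (hT1n t1 hM10) dT1
      have hll0 : 0 < l ^ 2 - l := by linarith
      have hmain : k * (H0 * G ^ (-(1 / (p - 1)))) ≤
          T1 t0 ^ (p / (p - 1)) - T1 t1 ^ (p / (p - 1)) := by
        refine le_trans ?_ hd
        have h1 : ((l ^ 2 - l) * t0 * a) ^ (1 / (p - 1)) * (H0 * a) ≤
            T1 t1 ^ (1 / (p - 1)) * (T1 t0 - T1 t1) := by
          have hT1 := hT1n t1 hM10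
          gcongr
        refine le_trans (le_of_eq ?_) h1
        have e1 : a ^ (1 / (p - 1)) * a = (G * (l ^ 2 * t0)) ^ (-(1 / (p - 1))) := by
          rw [← Real.rpow_add_one ha0.ne', ha, ← Real.rpow_mul (by positivity)]
          congr 1
          field_simp
          ring
        rw [Real.mul_rpow (by positivity) ha0.le, Real.mul_rpow hll0.le hM0.le]
        have e2 : (l ^ 2 * t0) ^ (-(1 / (p - 1))) =
            ((l ^ 2) ^ (1 / (p - 1)))⁻¹ * (t0 ^ (1 / (p - 1)))⁻¹ := by
          rw [Real.rpow_neg (by positivity), Real.mul_rpow (by positivity) hM0.le, mul_inv]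
        have e3 : k = (l ^ 2 - l) ^ (1 / (p - 1)) * ((l ^ 2) ^ (1 / (p - 1)))⁻¹ := by
          rw [hk, Real.div_rpow hll0.le (by positivity), div_eq_mul_inv]
        have e4 : t0 ^ (1 / (p - 1)) * (t0 ^ (1 / (p - 1)))⁻¹ = 1 :=
          mul_inv_cancel₀ (by positivity)
        calc k * (H0 * G ^ (-(1 / (p - 1)))) =
            (l ^ 2 - l) ^ (1 / (p - 1)) * ((l ^ 2) ^ (1 / (p - 1)))⁻¹ *
              (H0 * G ^ (-(1 / (p - 1)))) * (t0 ^ (1 / (p - 1)) * (t0 ^ (1 / (p - 1)))⁻¹) := by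
              rw [e4, e3, mul_one]
          _ = (l ^ 2 - l) ^ (1 / (p - 1)) * t0 ^ (1 / (p - 1)) *
              (G ^ (-(1 / (p - 1))) * (((l ^ 2) ^ (1 / (p - 1)))⁻¹ * (t0 ^ (1 / (p - 1)))⁻¹)) * H0 := by
              ring
          _ = (l ^ 2 - l) ^ (1 / (p - 1)) * t0 ^ (1 / (p - 1)) *
              (a ^ (1 / (p - 1)) * a) * H0 := by
              rw [e1, Real.mul_rpow hG.le (by positivity), e2]
          _ = _ := by ring
      have eX : (H0 ^ ((p - 1) / p) * G ^ (-(1 / p))) ^ (p / (p - 1)) =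
          H0 * G ^ (-(1 / (p - 1))) := by
        rw [Real.mul_rpow (by positivity) (by positivity), ← Real.rpow_mul hH00,
          ← Real.rpow_mul hG.le]
        have h1 : (p - 1) / p * (p / (p - 1)) = 1 := by field_simp
        have h2 : -(1 / p) * (p / (p - 1)) = -(1 / (p - 1)) := by field_simp
        rw [h1, h2, Real.rpow_one]
      rw [eX]
      have hA : H0 * G ^ (-(1 / (p - 1))) ≤
          1 / k * (T1 t0 ^ (p / (p - 1)) - T1 t1 ^ (p / (p - 1))) := by
        rw [one_div_mul_eq_div, le_div_iff₀ hk0]; linarith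
      have hd1 : 0 ≤ T1 t0 ^ (p / (p - 1)) - T1 t1 ^ (p / (p - 1)) := by linarith
      have hd2 : 0 ≤ T2 t0 - T2 t1 := by linarith
      have m1 := mul_nonneg (show 0 ≤ c2 + 1 by linarith) hd1
      have m2 := mul_nonneg (show 0 ≤ c2 + 1 / k by linarith) hd2
      linear_combination hA + hY + m1 + m2

end


lemma toI {p α c' κ τ : ℝ} (hp : 1 < p) (hα : 0 < α) (hc : 0 < c') (hκ : 0 < κ) (hτ : 0 < τ) :
    ∃ K > 0, ∀ Q β X Y ρ ξ : ℝ, 0 < Q → 0 ≤ β → 0 ≤ X → 0 ≤ Y → 0 < ρ → 0 < ξ → ξ ≤ τ * ρ →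
      κ * ρ ≤ c' * (Q ^ (-(1 / p)) * X + (β ^ (α / (p - 1)) / Q) ^ (1 / α) * Y) →
      κ * ρ * (ξ * (Q / (1 + ξ * Q ^ ((α - p + 1) / α) * β))) ^ (1 / (p - 1)) ≤
        K * (X ^ (p / (p - 1)) + Y) := by
  have hp1 : 0 < p - 1 := by linarith
  have hp0 : 0 < p := by linarith
  have he : 0 < 1 / (p - 1) := by positivity
  set K1 := κ * τ ^ (1 / (p - 1)) * (2 * c' / κ) ^ (p / (p - 1)) with hK1
  have hK1p : 0 < K1 := by positivity
  refine ⟨K1 + 2 * c', by positivity, ?_⟩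
  intro Q β X Y ρ ξ hQ hβ hX hY hρ hξ hξρ h
  have hXp : 0 ≤ X ^ (p / (p - 1)) := by positivity
  have hD : 0 ≤ ξ * Q ^ ((α - p + 1) / α) * β := by positivity
  by_cases hcase : (β ^ (α / (p - 1)) / Q) ^ (1 / α) * Y ≤ Q ^ (-(1 / p)) * X
  · have h1 : κ * ρ ≤ 2 * c' * (Q ^ (-(1 / p)) * X) := by
      have := mul_le_mul_of_nonneg_left hcase hc.le
      nlinarith
    have h2 : ρ * Q ^ (1 / p) ≤ 2 * c' / κ * X := by
      have hq : Q ^ (-(1 / p)) * Q ^ (1 / p) = 1 := by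
        rw [← Real.rpow_add hQ]; simp
      have h3 := mul_le_mul_of_nonneg_right h1 (show 0 ≤ Q ^ (1 / p) by positivity)
      rw [div_mul_eq_mul_div, le_div_iff₀ hκ]
      calc ρ * Q ^ (1 / p) * κ = κ * ρ * Q ^ (1 / p) := by ring
        _ ≤ _ := h3
        _ = 2 * c' * X * (Q ^ (-(1 / p)) * Q ^ (1 / p)) := by ring
        _ = _ := by rw [hq, mul_one]
    have h4 := Real.rpow_le_rpow (by positivity) h2 (show 0 ≤ p / (p - 1) by positivity)
    rw [Real.mul_rpow hρ.le (by positivity), Real.mul_rpow (by positivity) hX,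
      ← Real.rpow_mul hQ.le] at h4
    have e1 : 1 / p * (p / (p - 1)) = 1 / (p - 1) := by field_simp
    rw [e1] at h4
    have h5 : (ξ * (Q / (1 + ξ * Q ^ ((α - p + 1) / α) * β))) ^ (1 / (p - 1)) ≤
        (τ * ρ * Q) ^ (1 / (p - 1)) := by
      apply Real.rpow_le_rpow (by positivity) _ he.le
      apply mul_le_mul hξρ _ (by positivity) (by positivity)
      exact div_le_self hQ.le (by linarith)
    rw [Real.mul_rpow (by positivity) hQ.le, Real.mul_rpow hτ.le hρ.le] at h5
    have e2 : ρ ^ (p / (p - 1)) = ρ * ρ ^ (1 / (p - 1)) := by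
      have : p / (p - 1) = 1 + 1 / (p - 1) := by field_simp; ring
      rw [this, Real.rpow_add hρ, Real.rpow_one]
    calc _ ≤ κ * ρ * (τ ^ (1 / (p - 1)) * ρ ^ (1 / (p - 1)) * Q ^ (1 / (p - 1))) :=
          mul_le_mul_of_nonneg_left h5 (by positivity)
      _ = κ * τ ^ (1 / (p - 1)) * (ρ ^ (p / (p - 1)) * Q ^ (1 / (p - 1))) := by rw [e2]; ring
      _ ≤ κ * τ ^ (1 / (p - 1)) * ((2 * c' / κ) ^ (p / (p - 1)) * X ^ (p / (p - 1))) :=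
          mul_le_mul_of_nonneg_left h4 (by positivity)
      _ = K1 * X ^ (p / (p - 1)) := by rw [hK1]; ring
      _ ≤ _ := by
        have := mul_nonneg hK1p.le hY
        have := mul_nonneg hc.le hY
        have := mul_nonneg hc.le hXp
        nlinarith
  · push Not at hcase
    have h1 : κ * ρ ≤ 2 * c' * ((β ^ (α / (p - 1)) / Q) ^ (1 / α) * Y) := by
      have := mul_le_mul_of_nonneg_left hcase.le hc.le
      nlinarith
    have hβ0 : 0 < β := by
      rcases hβ.eq_or_lt with h0 | h0
      · exfalso
        rw [← h0, Real.zero_rpow (by positivity), zero_div, Real.zero_rpow (by positivity)] at h1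
        have : 0 < κ * ρ := by positivity
        linarith
      · exact h0
    have e1 : (β ^ (α / (p - 1)) / Q) ^ (1 / α) = β ^ (1 / (p - 1)) / Q ^ (1 / α) := by
      rw [Real.div_rpow (by positivity) hQ.le, ← Real.rpow_mul hβ]
      congr 2; field_simp
    have h5 : (ξ * (Q / (1 + ξ * Q ^ ((α - p + 1) / α) * β))) ^ (1 / (p - 1)) ≤
        (Q ^ ((p - 1) / α) / β) ^ (1 / (p - 1)) := by
      apply Real.rpow_le_rpow (by positivity) _ he.le
      have eQ : Q = Q ^ ((p - 1) / α) * Q ^ ((α - p + 1) / α) := by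
        rw [← Real.rpow_add hQ]
        have : (p - 1) / α + (α - p + 1) / α = 1 := by field_simp; ring
        rw [this, Real.rpow_one]
      rw [mul_div_assoc', div_le_div_iff₀ (by positivity) hβ0]
      have hz : 0 < Q ^ ((p - 1) / α) := by positivity
      calc ξ * Q * β = ξ * (Q ^ ((p - 1) / α) * Q ^ ((α - p + 1) / α)) * β := by rw [← eQ]
        _ ≤ _ := by nlinarith
    rw [Real.div_rpow (by positivity) hβ, ← Real.rpow_mul hQ.le] at h5
    have e3 : (p - 1) / α * (1 / (p - 1)) = 1 / α := by field_simp
    rw [e3] at h5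
    rw [e1] at h1
    have a1 : 0 < β ^ (1 / (p - 1)) := by positivity
    have a2 : 0 < Q ^ (1 / α) := by positivity
    calc _ ≤ 2 * c' * (β ^ (1 / (p - 1)) / Q ^ (1 / α) * Y) *
          (Q ^ (1 / α) / β ^ (1 / (p - 1))) :=
          mul_le_mul h1 h5 (by positivity) (by positivity)
      _ = 2 * c' * Y := by field_simp
      _ ≤ _ := by
        have := mul_nonneg hK1p.le hY
        have := mul_nonneg hK1p.le hXp
        have := mul_nonneg hc.le hXp
        nlinarith

lemma sphMax_cont {n : ℕ} (hn : 2 ≤ n) {u : Euc n → ℝ} (hu : Continuous u) :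
    ContinuousOn (sphMax u) (Ici 0) := by
  have h : Continuous (fun r : ℝ => sSup ((fun x : Euc n => u (r • x)) '' sphere (0 : Euc n) 1)) := by
    apply IsCompact.continuous_sSup (isCompact_sphere _ _)
    exact hu.comp (continuous_fst.smul continuous_snd)
  refine h.continuousOn.congr ?_
  intro r hr
  haveI := euc_nontrivial hn
  simp only [sphMax]
  congr 1
  have hr' : (0 : ℝ) ≤ r := hr
  ext y
  constructor
  · rintro ⟨x, hx, rfl⟩
    rw [mem_sphere_zero_iff_norm] at hx
    rcases hr'.eq_or_lt with h0 | h0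
    · obtain ⟨z, hz⟩ := exists_norm_eq (Euc n) (zero_le_one : (0 : ℝ) ≤ 1)
      refine ⟨z, by simpa using hz, ?_⟩
      have : x = 0 := by rw [← norm_eq_zero, hx, ← h0]
      simp [this, ← h0]
    · refine ⟨r⁻¹ • x, ?_, ?_⟩
      · rw [mem_sphere_zero_iff_norm, norm_smul, hx, norm_inv, Real.norm_of_nonneg hr',
          inv_mul_cancel₀ h0.ne']
      · simp only [smul_smul, mul_inv_cancel₀ h0.ne', one_smul]
  · rintro ⟨x, hx, rfl⟩
    rw [mem_sphere_zero_iff_norm] at hx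
    refine ⟨r • x, ?_, rfl⟩
    rw [mem_sphere_zero_iff_norm, norm_smul, hx, Real.norm_of_nonneg hr', mul_one]

lemma meas_Ann {n : ℕ} (a b : ℝ) : MeasurableSet (Ann n a b) := by
  unfold Ann
  exact (measurableSet_lt measurable_const measurable_norm).inter
    (measurableSet_lt measurable_norm measurable_const)

lemma qinf_nonneg {n : ℕ} {q : Euc n → ℝ} (hq0 : ∀ x, 0 ≤ q x) (σ ξ : ℝ) : 0 ≤ qinf q σ ξ := by
  unfold qinf
  rw [essInf, Filter.liminf_eq]
  apply Real.sSup_nonneg'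
  refine ⟨0, ?_, le_rfl⟩
  rw [mem_setOf_eq]
  exact Eventually.of_forall hq0

lemma qinf_ae {n : ℕ} {q : Euc n → ℝ} (hq0 : ∀ x, 0 ≤ q x)
    (σ ξ : ℝ) :
    ∀ᵐ x : Euc n, ξ / σ < ‖x‖ → ‖x‖ < σ * ξ → qinf q σ ξ ≤ q x := by
  have h : ∀ᵐ x ∂(volume.restrict (Ann n (ξ / σ) (σ * ξ))), qinf q σ ξ ≤ q x := by
    exact ae_essInf_le ⟨0, eventually_map.2 (Eventually.of_forall hq0)⟩
  rw [ae_restrict_iff' (meas_Ann _ _)] at h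
  filter_upwards [h] with x hx h1 h2 using hx ⟨h1, h2⟩

lemma bsup_ae {n : ℕ} {b : Euc n → ℝ} (hb0 : ∀ x, 0 ≤ b x) (hbl : LocBdd b)
    (σ ξ : ℝ) {e : ℝ} (he : 0 < e) :
    0 ≤ essSup (fun x => b x ^ e) (volume.restrict (Ann n (ξ / σ) (σ * ξ))) ∧
    ∀ᵐ x : Euc n, ξ / σ < ‖x‖ → ‖x‖ < σ * ξ →
      b x ≤ (essSup (fun x => b x ^ e) (volume.restrict (Ann n (ξ / σ) (σ * ξ)))) ^ e⁻¹ := by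
  set μ := (volume : Measure (Euc n)).restrict (Ann n (ξ / σ) (σ * ξ)) with hμ
  have h0 : 0 ≤ essSup (fun x => b x ^ e) μ := by
    rw [essSup, Filter.limsup_eq]
    rcases (ae μ).eq_or_neBot with h | h
    · rw [h]; simp
    · apply Real.sInf_nonneg
      intro a ha
      obtain ⟨x, hx⟩ := (show ∀ᶠ x in ae μ, b x ^ e ≤ a from ha).exists
      exact le_trans (Real.rpow_nonneg (hb0 x) _) hx
  refine ⟨h0, ?_⟩
  obtain ⟨K, hK⟩ := hbl (closedBall 0 (σ * ξ)) (isCompact_closedBall _ _)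
  have hbd : IsBoundedUnder (· ≤ ·) (ae μ) (fun x => b x ^ e) := by
    refine ⟨K ^ e, ?_⟩
    rw [eventually_map]
    change ∀ᵐ x ∂μ, b x ^ e ≤ K ^ e
    rw [hμ, ae_restrict_iff' (meas_Ann _ _)]
    filter_upwards with x hx
    exact Real.rpow_le_rpow (hb0 x) (hK x (by simpa using hx.2.le)) he.le
  have h : ∀ᵐ x ∂μ, b x ^ e ≤ essSup (fun x => b x ^ e) μ := ae_le_essSup hbd
  rw [hμ, ae_restrict_iff' (meas_Ann _ _)] at h
  filter_upwards [h] with x hx h1 h2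
  have := Real.rpow_le_rpow (Real.rpow_nonneg (hb0 x) _) (hx ⟨h1, h2⟩) (inv_nonneg.2 he.le)
  rwa [← Real.rpow_mul (hb0 x), mul_inv_cancel₀ he.ne', Real.rpow_one] at this



lemma fz_parts {g : ℝ → ℝ} {θ : ℝ} (hθ : 1 < θ) (hg : ContinuousOn g (Set.Ici 0))
    (hgp : ∀ t : ℝ, 0 < t → 0 < g t) (p α : ℝ) {ξ : ℝ} (hξ : 0 < ξ) :
    (∀ t ∈ Ioi ξ, 0 ≤ phi1 g θ p t) ∧ (∀ t ∈ Ioi ξ, 0 ≤ phi2 g θ α t) := by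
  constructor
  · intro t ht
    have ht0 : 0 < t := hξ.trans ht
    exact Real.rpow_nonneg (mul_nonneg (ginf_pos hθ hg hgp ht0).le ht0.le) _
  · intro t ht
    have ht0 : 0 < t := hξ.trans ht
    exact Real.rpow_nonneg (ginf_pos hθ hg hgp ht0).le _

lemma Fzero_nonneg {g : ℝ → ℝ} {θ : ℝ} (hθ : 1 < θ) (hg : ContinuousOn g (Set.Ici 0))
    (hgp : ∀ t : ℝ, 0 < t → 0 < g t) (p α : ℝ) {ξ : ℝ} (hξ : 0 < ξ) :
    0 ≤ Fzero g θ p α ξ := by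
  obtain ⟨h1, h2⟩ := fz_parts hθ hg hgp p α hξ
  exact add_nonneg (Real.rpow_nonneg (setIntegral_nonneg measurableSet_Ioi h1) _)
    (setIntegral_nonneg measurableSet_Ioi h2)

lemma Fzero_anti {g : ℝ → ℝ} {θ p α : ℝ} (hθ : 1 < θ) (hp : 1 < p)
    (hg : ContinuousOn g (Set.Ici 0))
    (hgp : ∀ t : ℝ, 0 < t → 0 < g t)
    (hi1 : ∀ ξ, 0 < ξ → IntegrableOn (phi1 g θ p) (Ioi ξ))
    (hi2 : ∀ ξ, 0 < ξ → IntegrableOn (phi2 g θ α) (Ioi ξ))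
    {ξ η : ℝ} (hξ : 0 < ξ) (h : ξ ≤ η) :
    Fzero g θ p α η ≤ Fzero g θ p α ξ := by
  have hp1 : 0 < p - 1 := by linarith
  obtain ⟨h1, h2⟩ := fz_parts hθ hg hgp p α hξ
  have a1 := tail_lower h (hi1 ξ hξ) (m := 0) (fun t ht => h1 t ht.1)
  have a2 := tail_lower h (hi2 ξ hξ) (m := 0) (fun t ht => h2 t ht.1)
  obtain ⟨h3, h4⟩ := fz_parts hθ hg hgp p α (hξ.trans_le h)
  apply add_le_add
  · apply Real.rpow_le_rpow (setIntegral_nonneg measurableSet_Ioi h3) _ (by positivity)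
    change (∫ t in Ioi η, phi1 g θ p t) ≤ ∫ t in Ioi ξ, phi1 g θ p t
    linarith
  · change (∫ t in Ioi η, phi2 g θ α t) ≤ ∫ t in Ioi ξ, phi2 g θ α t
    linarith

lemma per_annulus (n : ℕ) (hn : 2 ≤ n) (p C₁ C₂ α : ℝ) (hp : 1 < p)
    (hC₁ : 0 < C₁) (hC₂ : 0 < C₂) (hα₁ : p - 1 ≤ α)
    (θ σ : ℝ) (hθ : 1 < θ) (hσ : 1 < σ) :
    ∃ C : ℝ, 0 < C ∧ ∀ (A : Euc n → Euc n → Euc n) (b q : Euc n → ℝ)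
    (g : ℝ → ℝ) (u : Euc n → ℝ), Sol n p C₁ C₂ α A b q g u →
    (∀ ξ, 0 < ξ → IntegrableOn (phi1 g θ p) (Ioi ξ)) →
    (∀ ξ, 0 < ξ → IntegrableOn (phi2 g θ α) (Ioi ξ)) →
    ∀ ρ, 0 < ρ → 0 < sphMax u ρ → ∀ ξ, ρ ≤ ξ → ξ ≤ 2 * σ / (σ + 1) * ρ →
      (2 * σ / (σ + 1) * ρ - ρ) * (ξ * fdef q b p α σ ξ) ^ (1 / (p - 1)) ≤
        C * (Fzero g θ p α (sphMax u ρ) - Fzero g θ p α (sphMax u (2 * σ / (σ + 1) * ρ))) := by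
  have hp1 : 0 < p - 1 := by linarith
  have hα : 0 < α := by linarith
  have hσ0 : 0 < σ := by linarith
  have hτ : 1 < 2 * σ / (σ + 1) := by rw [lt_div_iff₀ (by linarith)]; linarith
  have hτσ : 2 * σ / (σ + 1) ≤ σ := by rw [div_le_iff₀ (by linarith)]; nlinarith
  have hτ2 : 2 * σ / (σ + 1) / σ = 2 - 2 * σ / (σ + 1) := by field_simp; ring
  set τ := 2 * σ / (σ + 1) with hτd
  have hτ0 : 0 < τ := by linarith
  obtain ⟨c, hc, hss⟩ := single_step n hn p C₁ C₂ α hp hC₁ hC₂ hα₁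
  obtain ⟨D, hD, hann⟩ := annulus hθ hp hα
  obtain ⟨K, hK, hI⟩ := toI (c' := c * D) (κ := τ - 1) (τ := τ) hp hα (by positivity)
    (by linarith) hτ0
  refine ⟨K * D, by positivity, ?_⟩
  intro A b q g u S hi1 hi2 ρ hρ hM ξ hξ1 hξ2
  have hξ0 : 0 < ξ := by linarith
  have hρτ : ρ < τ * ρ := by nlinarith
  have hanti : Fzero g θ p α (sphMax u (τ * ρ)) ≤ Fzero g θ p α (sphMax u ρ) :=
    Fzero_anti hθ hp S.hg S.hgp hi1 hi2 hM (S.mono hρ hρτ.le)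
  have he : 0 < (p - 1) / α := by positivity
  obtain ⟨hβ0, hβ⟩ := bsup_ae (n := n) S.hb0 S.hbl σ ξ he
  have hQae := qinf_ae (n := n) S.hq0 σ ξ
  have hQ0 := qinf_nonneg (n := n) S.hq0 σ ξ
  rcases hQ0.eq_or_lt with hQz | hQ
  · have : fdef q b p α σ ξ = 0 := by unfold fdef; rw [← hQz, zero_div]
    rw [this, mul_zero, Real.zero_rpow (by positivity), mul_zero]
    exact mul_nonneg (by positivity) (by linarith)
  unfold fdef
  set Q := qinf q σ ξ with hQd
  set β := essSup (fun x => b x ^ ((p - 1) / α)) (volume.restrict (Ann n (ξ / σ) (σ * ξ))) with hβd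
  rw [inv_div] at hβ
  have hae : ∀ᵐ x : Euc n, ξ / σ < ‖x‖ → ‖x‖ < σ * ξ → b x ≤ β ^ (α / (p - 1)) ∧ Q ≤ q x := by
    filter_upwards [hβ, hQae] with x h1 h2 h3 h4 using ⟨h1 h3 h4, h2 h3 h4⟩
  have hlo : ξ / σ ≤ (2 - τ) * ρ := by
    rw [← hτ2, div_mul_eq_mul_div]
    exact div_le_div_of_nonneg_right hξ2 hσ0.le
  have hhi : τ * ρ ≤ σ * ξ := mul_le_mul hτσ hξ1 hρ.le hσ0.le
  obtain ⟨X, Y, hX, hY, hXY, hF⟩ := hann g S.hg S.hgp hi1 hi2 (sphMax u) ρ (τ * ρ) hρτ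
    (fun a ha b hb hab => S.mono (by linarith [ha.1]) hab)
    ((sphMax_cont hn S.hu.continuous).mono (fun a ha => by
      have := ha.1
      exact (hρ.le.trans this)))
    hM c (Q ^ (-(1 / p))) ((β ^ (α / (p - 1)) / Q) ^ (1 / α)) hc.le (by positivity) (by positivity)
    (fun r s H G h1 h2 h3 h4 h5 h6 h7 h8 => hss A b q g u S (ξ / σ) (σ * ξ) Q _ hQ
      (by positivity) hae r s H G (by linarith) h2 (by nlinarith) (by linarith) h4 h5 h6 h7 h8)
  have hfin := hI Q β X Y ρ ξ hQ hβ0 hX hY hρ hξ0 hξ2 (by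
    calc (τ - 1) * ρ = τ * ρ - ρ := by ring
      _ ≤ _ := hXY)
  calc _ = (τ - 1) * ρ * (ξ * (Q / (1 + ξ * Q ^ ((α - p + 1) / α) * β))) ^ (1 / (p - 1)) := by
        ring
    _ ≤ _ := hfin
    _ ≤ K * (D * (Fzero g θ p α (sphMax u ρ) - Fzero g θ p α (sphMax u (τ * ρ)))) :=
        mul_le_mul_of_nonneg_left hF hK.le
    _ = _ := by ring

lemma sphMax_nonneg {n : ℕ} {u : Euc n → ℝ} (hu : ∀ x, 0 ≤ u x) (r : ℝ) : 0 ≤ sphMax u r := by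
  apply Real.sSup_nonneg
  rintro _ ⟨x, -, rfl⟩
  exact hu x

/-- Theorem 2.3 (upper a priori estimate): if both `g_θ` integrals converge while the `f_σ`
integral converges, there is a constant `C > 0` depending only on `n, p, θ, σ, α, C₁, C₂`
such that every nonnegative solution satisfies, for all sufficiently large `r`, either
`M(r;u) = 0` or `F₀(M(r;u)) ≥ C ∫_r^∞ (ξ f_σ(ξ))^{1/(p-1)} dξ`. -/
theorem stmt_2 (n : ℕ) (hn : 2 ≤ n) (p C₁ C₂ α : ℝ) (hp : 1 < p)
    (hC₁ : 0 < C₁) (hC₂ : 0 < C₂) (hα₁ : p - 1 ≤ α) (hα₂ : α ≤ p)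
    (θ σ : ℝ) (hθ : 1 < θ) (hσ : 1 < σ) :
    ∃ C : ℝ, 0 < C ∧
      ∀ (r₀ : ℝ), 0 < r₀ →
      ∀ (A : Euc n → Euc n → Euc n), StructCond A p C₁ C₂ →
      ∀ (b : Euc n → ℝ), Measurable b → (∀ x, 0 ≤ b x) → LocBdd b →
      ∀ (q : Euc n → ℝ), Measurable q → (∀ x, 0 ≤ q x) → LocBdd q →
      ∀ (g : ℝ → ℝ), ContinuousOn g (Set.Ici 0) → (∀ t ∈ Set.Ici (0 : ℝ), 0 ≤ g t) →
        (∀ t : ℝ, 0 < t → 0 < g t) →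
      (∫⁻ t in Set.Ioi (1 : ℝ), ENNReal.ofReal ((ginf g θ t * t) ^ (-(1 / p)))) < ⊤ →
      (∫⁻ t in Set.Ioi (1 : ℝ), ENNReal.ofReal (ginf g θ t ^ (-(1 / α)))) < ⊤ →
      (∫⁻ r in Set.Ioi r₀, ENNReal.ofReal ((r * fdef q b p α σ r) ^ (1 / (p - 1)))) < ⊤ →
      ∀ u : Euc n → ℝ, ContDiff ℝ 1 u → (∀ x, 0 ≤ u x) →
        IsWeakSol A b α (fun x => q x * g (u x)) Set.univ u →
        ∃ R : ℝ, r₀ < R ∧ ∀ r : ℝ, R ≤ r →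
          sphMax u r = 0 ∨
            C * ∫ ξ in Set.Ioi r, (ξ * fdef q b p α σ ξ) ^ (1 / (p - 1)) ≤
              Fzero g θ p α (sphMax u r) := by
  have hα : 0 < α := by linarith
  obtain ⟨C, hC, hper⟩ := per_annulus n hn p C₁ C₂ α hp hC₁ hC₂ hα₁ θ σ hθ hσ
  refine ⟨1 / C, by positivity, ?_⟩
  intro r₀ hr₀ A hA b hbm hb0 hbl q hqm hq0 hql g hg hg0 hgp hI1 hI2 hI3 u hu hu0 hsol
  refine ⟨r₀ + 1, by linarith, ?_⟩
  intro r hr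
  have hr0 : 0 < r := by linarith
  have S : Sol n p C₁ C₂ α A b q g u :=
    ⟨hn, hp, hC₁, hC₂, hα₁, hα₂, hA, hbm, hb0, hbl, hqm, hq0, hql, hg, hg0, hgp, hu, hu0, hsol⟩
  have hi1 : ∀ ξ, 0 < ξ → IntegrableOn (phi1 g θ p) (Ioi ξ) := fun ξ hξ =>
    phi1_int hθ hg hgp (by linarith) hI1 hξ
  have hi2 : ∀ ξ, 0 < ξ → IntegrableOn (phi2 g θ α) (Ioi ξ) := fun ξ hξ =>
    phi2_int hθ hg hgp hα hI2 hξ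
  rcases (sphMax_nonneg hu0 r).eq_or_lt with hz | hM
  · exact Or.inl hz.symm
  right
  have hFnn : ∀ s, r ≤ s → 0 ≤ Fzero g θ p α (sphMax u s) := fun s hs =>
    Fzero_nonneg hθ hg hgp p α (hM.trans_le (S.mono hr0 hs))
  set I : ℝ → ℝ := fun ξ => (ξ * fdef q b p α σ ξ) ^ (1 / (p - 1)) with hId
  change 1 / C * ∫ ξ in Ioi r, I ξ ≤ _
  by_cases hIntg : IntegrableOn I (Ioi r)
  swap
  · rw [integral_undef hIntg, mul_zero]
    exact hFnn r le_rfl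
  have hτ : 1 < 2 * σ / (σ + 1) := by rw [lt_div_iff₀ (by linarith)]; linarith
  replace hper := hper A b q g u S hi1 hi2
  set τ := 2 * σ / (σ + 1) with hτd
  have hrj : ∀ j : ℕ, r ≤ τ ^ j * r := fun j =>
    le_mul_of_one_le_left hr0.le (one_le_pow₀ hτ.le)
  have hstep : ∀ j : ℕ, ∫ ξ in Ioc (τ ^ j * r) (τ ^ (j + 1) * r), I ξ ≤
      C * (Fzero g θ p α (sphMax u (τ ^ j * r)) - Fzero g θ p α (sphMax u (τ ^ (j + 1) * r))) := by
    intro j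
    have hρ : 0 < τ ^ j * r := by positivity
    have hMρ : 0 < sphMax u (τ ^ j * r) := hM.trans_le (S.mono hr0 (hrj j))
    have e : τ ^ (j + 1) * r = τ * (τ ^ j * r) := by ring
    rw [e]
    set ρ := τ ^ j * r with hρd
    have hlt : 0 < τ * ρ - ρ := by nlinarith
    set Δ := C * (Fzero g θ p α (sphMax u ρ) - Fzero g θ p α (sphMax u (τ * ρ))) with hΔ
    have hb : ∀ ξ ∈ Ioc ρ (τ * ρ), I ξ ≤ Δ / (τ * ρ - ρ) := by
      intro ξ hξ
      rw [le_div_iff₀ hlt, mul_comm]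
      exact hper ρ hρ hMρ ξ hξ.1.le hξ.2
    have hIntg' : IntegrableOn I (Ioc ρ (τ * ρ)) :=
      hIntg.mono_set (fun ξ hξ => (hrj j).trans_lt hξ.1)
    have h1 := setIntegral_mono_on hIntg'
      (integrableOn_const (C := Δ / (τ * ρ - ρ)) measure_Ioc_lt_top.ne) measurableSet_Ioc hb
    rw [setIntegral_const, Real.volume_real_Ioc_of_le (by linarith), smul_eq_mul,
      mul_div_cancel₀ _ hlt.ne'] at h1
    exact h1
  have hsum : ∀ N : ℕ, ∫ ξ in r..(τ ^ N * r), I ξ ≤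
      C * (Fzero g θ p α (sphMax u r) - Fzero g θ p α (sphMax u (τ ^ N * r))) := by
    intro N
    induction N with
    | zero => simp
    | succ j ih =>
      have hle : τ ^ j * r ≤ τ ^ (j + 1) * r := by
        rw [pow_succ]
        have : 0 < τ ^ j * r := by positivity
        nlinarith
      have i1 : IntervalIntegrable I volume r (τ ^ j * r) := by
        rw [intervalIntegrable_iff_integrableOn_Ioc_of_le (hrj j)]
        exact hIntg.mono_set Ioc_subset_Ioi_self
      have i2 : IntervalIntegrable I volume (τ ^ j * r) (τ ^ (j + 1) * r) := by
        rw [intervalIntegrable_iff_integrableOn_Ioc_of_le hle]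
        exact hIntg.mono_set (fun ξ hξ => (hrj j).trans_lt hξ.1)
      rw [← intervalIntegral.integral_add_adjacent_intervals i1 i2,
        intervalIntegral.integral_of_le hle]
      have := hstep j
      linarith
  have hlim : Tendsto (fun N : ℕ => τ ^ N * r) atTop atTop :=
    (tendsto_pow_atTop_atTop_of_one_lt hτ).atTop_mul_const hr0
  have hT := intervalIntegral_tendsto_integral_Ioi r hIntg hlim
  have hfin : ∫ ξ in Ioi r, I ξ ≤ C * Fzero g θ p α (sphMax u r) := by
    refine le_of_tendsto hT (Eventually.of_forall fun N => (hsum N).trans ?_)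
    exact mul_le_mul_of_nonneg_left (by linarith [hFnn _ (hrj N)]) hC.le
  rw [one_div_mul_eq_div, div_le_iff₀ hC]
  linarith
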